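/- arXiv:2108.01767 — 4 statements merged into one kernel-verified Lean document; each statement's English description precedes it below -/
import Mathlib

section
/- Let K be a field of characteristic zero, let G be a finite group, and let V be a finite-dimensional K-vector space on which G acts K-linearly. Consider the induced action of G on the exterior algebra Λ(V) by degree-preserving K-algebra automorphisms (each g acts as the algebra automorphism induced by its linear action on V). Then the fixed subalgebra Λ(V)^G is generated as a K-algebra by its elements of degree at most |G|, i.e., by the set Λ(V)^G ∩ (⊕_{d ≤ |G|} Λ^d(V)). (Noether's Degree Bound for the exterior algebra.) -/
open scoped TensorProduct IsMulCommutative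

namespace NoetherExt

open MvPolynomial in
lemma esymm_mem (σ K : Type*) [Fintype σ] [Field K] [CharZero K] (k : ℕ) :
    esymm σ K k ∈ Algebra.adjoin K {p | ∃ j ≤ Fintype.card σ, p = psum σ K j} := by
  induction k using Nat.strong_induction_on with
  | _ k ih =>
    rcases Nat.eq_zero_or_pos k with rfl | hk
    · rw [esymm_zero]; exact one_mem _
    by_cases hkn : k ≤ Fintype.card σ
    · have h := mul_esymm_eq_sum σ K k
      have hk0 : (k : K) ≠ 0 := by exact_mod_cast hk.ne'
      have h2 : esymm σ K k = (k : K)⁻¹ • ((k : MvPolynomial σ K) * esymm σ K k) := by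
        rw [← nsmul_eq_mul, ← Nat.cast_smul_eq_nsmul K, smul_smul, inv_mul_cancel₀ hk0, one_smul]
      rw [h2, h]
      refine Subalgebra.smul_mem _ (mul_mem (pow_mem (neg_mem (one_mem _)) _)
        (sum_mem fun a ha => ?_)) _
      simp only [Finset.mem_filter] at ha
      have ha1 := Finset.HasAntidiagonal.mem_antidiagonal.1 ha.1
      refine mul_mem (mul_mem (pow_mem (neg_mem (one_mem _)) _) (ih _ ha.2)) ?_
      exact Algebra.subset_adjoin ⟨a.2, by omega, rfl⟩
    · have : esymm σ K k = 0 := by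
        rw [esymm, Finset.powersetCard_eq_empty.2, Finset.sum_empty]
        rw [Finset.card_univ]; omega
      rw [this]; exact zero_mem _

open MvPolynomial in
lemma psum_mem (σ K : Type*) [Fintype σ] [Field K] [CharZero K] (k : ℕ) :
    psum σ K k ∈ Algebra.adjoin K {p | ∃ j ≤ Fintype.card σ, p = psum σ K j} := by
  induction k using Nat.strong_induction_on with
  | _ k ih =>
    rcases Nat.eq_zero_or_pos k with rfl | hk
    · exact Algebra.subset_adjoin ⟨0, by omega, rfl⟩
    rw [psum_eq_mul_esymm_sub_sum σ K k hk]
    refine sub_mem (mul_mem (mul_mem (pow_mem (neg_mem (one_mem _)) _) (natCast_mem _ _))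
      (esymm_mem σ K k)) (sum_mem fun a ha => ?_)
    simp only [Finset.mem_filter, Set.mem_Ioo] at ha
    have ha1 := Finset.HasAntidiagonal.mem_antidiagonal.1 ha.1
    exact mul_mem (mul_mem (pow_mem (neg_mem (one_mem _)) _) (esymm_mem σ K _))
      (ih _ (by omega))

/-- Power sums of commuting elements lie in the subalgebra generated by the low ones. -/
lemma psum_comm_mem {σ K T : Type*} [Fintype σ] [Field K] [CharZero K] [Ring T] [Algebra K T]
    (u : σ → T) (hu : ∀ i j, u i * u j = u j * u i) (S : Subalgebra K T)
    (hS : ∀ k ≤ Fintype.card σ, ∑ i, u i ^ k ∈ S) (d : ℕ) : ∑ i, u i ^ d ∈ S := by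
  have hc : ∀ a ∈ Set.range u, ∀ b ∈ Set.range u, a * b = b * a := by
    rintro _ ⟨i, rfl⟩ _ ⟨j, rfl⟩; exact hu i j
  have := Algebra.isMulCommutative_adjoin K hc
  let w : σ → Algebra.adjoin K (Set.range u) := fun i => ⟨u i, Algebra.subset_adjoin ⟨i, rfl⟩⟩
  let F : MvPolynomial σ K →ₐ[K] T := (Algebra.adjoin K (Set.range u)).val.comp (MvPolynomial.aeval w)
  have hF : ∀ k, F (MvPolynomial.psum σ K k) = ∑ i, u i ^ k := by
    intro k
    simp [F, MvPolynomial.psum, w]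
  have key : Algebra.adjoin K {p | ∃ j ≤ Fintype.card σ, p = MvPolynomial.psum σ K j}
      ≤ S.comap F := by
    rw [Algebra.adjoin_le_iff]
    rintro _ ⟨j, hj, rfl⟩
    change F _ ∈ S
    rw [hF]; exact hS j hj
  have h := key (psum_mem σ K d)
  change F _ ∈ S at h
  rwa [hF] at h

lemma ι_swap {K V : Type*} [Field K] [AddCommGroup V] [Module K V] (x y : V) :
    ExteriorAlgebra.ι K x * ExteriorAlgebra.ι K y =
      -(ExteriorAlgebra.ι K y * ExteriorAlgebra.ι K x) :=
  eq_neg_of_add_eq_zero_left (ExteriorAlgebra.ι_add_mul_swap x y)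

lemma prod_tmul {K A B : Type*} [Field K] [Ring A] [Algebra K A] [Ring B] [Algebra K B]
    {k : ℕ} (a : Fin k → A) (b : Fin k → B) :
    (List.ofFn fun i => a i ⊗ₜ[K] b i).prod = (List.ofFn a).prod ⊗ₜ[K] (List.ofFn b).prod := by
  induction k with
  | zero => simp [Algebra.TensorProduct.one_def]
  | succ k ih => simp [List.ofFn_succ, ih]

section
variable {K V : Type*} [Field K] [AddCommGroup V] [Module K V]

/-- The auxiliary even element. -/
noncomputable def elt {d : ℕ} (v : Fin d → V) :
    ExteriorAlgebra K V ⊗[K] ExteriorAlgebra K (Fin d → K) :=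
  ∑ i, ExteriorAlgebra.ι K (v i) ⊗ₜ[K] ExteriorAlgebra.ι K (Pi.single i (1 : K))

lemma elt_comm {d : ℕ} (v w : Fin d → V) : elt (K := K) v * elt w = elt w * elt v := by
  simp only [elt, Finset.sum_mul_sum]
  rw [Finset.sum_comm]
  refine Finset.sum_congr rfl fun i _ => Finset.sum_congr rfl fun j _ => ?_
  rw [Algebra.TensorProduct.tmul_mul_tmul, Algebra.TensorProduct.tmul_mul_tmul,
    ι_swap (v j), ι_swap (Pi.single j 1), TensorProduct.neg_tmul, TensorProduct.tmul_neg, neg_neg]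

lemma elt_pow {d : ℕ} (v : Fin d → V) (k : ℕ) :
    elt (K := K) v ^ k = ∑ f : Fin k → Fin d, ExteriorAlgebra.ιMulti K k (fun i => v (f i)) ⊗ₜ[K]
      ExteriorAlgebra.ιMulti K k (fun i => (Pi.single (f i) (1 : K) : Fin d → K)) := by
  have h := (MultilinearMap.mkPiAlgebraFin K k
    (ExteriorAlgebra K V ⊗[K] ExteriorAlgebra K (Fin d → K))).map_sum
    (fun _ (i : Fin d) =>
      ExteriorAlgebra.ι K (v i) ⊗ₜ[K] ExteriorAlgebra.ι K (Pi.single i (1 : K) : Fin d → K))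
  simp only [MultilinearMap.mkPiAlgebraFin_apply, prod_tmul, List.ofFn_const,
    List.prod_replicate] at h
  exact h

/-- The functional extracting the top coefficient. -/
noncomputable def top (K : Type*) [Field K] (d : ℕ) : ExteriorAlgebra K (Fin d → K) →ₗ[K] K :=
  ExteriorAlgebra.liftAlternating (fun i =>
    if h : i = d then h ▸ (Matrix.detRowAlternating : (Fin i → K) [⋀^Fin i]→ₗ[K] K) else 0)

lemma top_apply (d : ℕ) (w : Fin d → Fin d → K) :
    top K d (ExteriorAlgebra.ιMulti K d w) = Matrix.detRowAlternating w := by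
  simp [top, ExteriorAlgebra.liftAlternating_apply_ιMulti]

/-- Contraction of the second factor. -/
noncomputable def contr (K V : Type*) [Field K] [AddCommGroup V] [Module K V] (d : ℕ) :
    ExteriorAlgebra K V ⊗[K] ExteriorAlgebra K (Fin d → K) →ₗ[K] ExteriorAlgebra K V :=
  (TensorProduct.rid K (ExteriorAlgebra K V)).toLinearMap ∘ₗ
    LinearMap.lTensor (ExteriorAlgebra K V) (top K d)

lemma contr_tmul (d : ℕ) (a : ExteriorAlgebra K V) (b : ExteriorAlgebra K (Fin d → K)) :
    contr K V d (a ⊗ₜ b) = top K d b • a := by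
  simp [contr]

lemma contr_elt_pow [CharZero K] (d : ℕ) : ∃ c : K, c ≠ 0 ∧ ∀ v : Fin d → V,
    contr K V d (elt v ^ d) = c • ExteriorAlgebra.ιMulti K d v := by
  classical
  refine ⟨((Finset.univ.filter fun f : Fin d → Fin d => Function.Bijective f).card : K), ?_, ?_⟩
  · rw [Nat.cast_ne_zero]
    exact Finset.card_ne_zero_of_mem (a := id) (Finset.mem_filter.2 ⟨Finset.mem_univ _, Function.bijective_id⟩)
  intro v
  rw [elt_pow, map_sum]
  have : ∀ f : Fin d → Fin d, contr K V d (ExteriorAlgebra.ιMulti K d (fun i => v (f i)) ⊗ₜ[K]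
      ExteriorAlgebra.ιMulti K d (fun i => (Pi.single (f i) (1 : K) : Fin d → K))) =
      if Function.Bijective f then ExteriorAlgebra.ιMulti K d v else 0 := by
    intro f
    rw [contr_tmul, top_apply]
    split_ifs with hf
    · obtain ⟨σ, rfl⟩ : ∃ σ : Equiv.Perm (Fin d), ⇑σ = f := ⟨Equiv.ofBijective f hf, rfl⟩
      have h1 := (ExteriorAlgebra.ιMulti K d).map_perm v σ
      have h2 := (Matrix.detRowAlternating : (Fin d → K) [⋀^Fin d]→ₗ[K] K).map_perm
        (fun i => (Pi.single i (1 : K) : Fin d → K)) σ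
      have h3 : (Matrix.detRowAlternating : (Fin d → K) [⋀^Fin d]→ₗ[K] K)
        (fun i => (Pi.single i (1 : K) : Fin d → K)) = 1 := by
        have : (fun i => (Pi.single i (1 : K) : Fin d → K)) = (1 : Matrix (Fin d) (Fin d) K) := by
          ext i j; simp [Matrix.one_apply, Pi.single_apply, eq_comm]
        rw [this]; exact Matrix.det_one
      simp only [Function.comp_def] at h1 h2
      rw [h1, h2, h3]
      rcases Int.units_eq_one_or (Equiv.Perm.sign σ) with h | h <;> simp [h]
    · have : ¬ Function.Injective f := fun h => hf (Finite.injective_iff_bijective.1 h)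
      rw [(ExteriorAlgebra.ιMulti K d).map_eq_zero_of_not_injective, smul_zero]
      exact fun h => this (Function.Injective.of_comp (f := v) h)
  simp only [this]
  rw [← Finset.sum_filter, Finset.sum_const, Nat.cast_smul_eq_nsmul]

lemma contr_mem (d : ℕ) (B : Subalgebra K (ExteriorAlgebra K V))
    (z : ExteriorAlgebra K V ⊗[K] ExteriorAlgebra K (Fin d → K))
    (hz : z ∈ (Algebra.TensorProduct.map B.val
      (AlgHom.id K (ExteriorAlgebra K (Fin d → K)))).range) : contr K V d z ∈ B := by
  obtain ⟨y, rfl⟩ := hz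
  induction y using TensorProduct.induction_on with
  | zero => simp
  | tmul a b =>
    simp only [AlgHom.toRingHom_eq_coe, RingHom.coe_coe, Algebra.TensorProduct.map_tmul, contr_tmul]
    exact B.smul_mem a.2 _
  | add a b ha hb => rw [map_add, map_add]; exact add_mem ha hb

variable {G : Type*} [Group G] [Fintype G] (ρ : Representation K G V)

lemma map_map (g h : G) (x : ExteriorAlgebra K V) : ExteriorAlgebra.map (ρ g)
    (ExteriorAlgebra.map (ρ h) x) = ExteriorAlgebra.map (ρ (g * h)) x := by
  rw [map_mul, Module.End.mul_eq_comp, ← ExteriorAlgebra.map_comp_map, AlgHom.comp_apply]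

lemma sum_inv (x : ExteriorAlgebra K V) (g : G) : ExteriorAlgebra.map (ρ g)
    (∑ h, ExteriorAlgebra.map (ρ h) x) = ∑ h, ExteriorAlgebra.map (ρ h) x := by
  rw [map_sum]
  simp only [map_map]
  exact Fintype.sum_equiv (Equiv.mulLeft g) _ _ fun _ => rfl

lemma transfer_mem [CharZero K] (B : Subalgebra K (ExteriorAlgebra K V))
    (hB : ∀ k ≤ Fintype.card G, ∀ v : Fin k → V,
      ∑ g, ExteriorAlgebra.map (ρ g) (ExteriorAlgebra.ιMulti K k v) ∈ B)
    (x : ExteriorAlgebra K V) : ∑ g, ExteriorAlgebra.map (ρ g) x ∈ B := by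
  have hx : x ∈ Submodule.span K (Set.range fun x : Σ n, (Fin n → V) =>
    ExteriorAlgebra.ιMulti K x.1 x.2) := by rw [ExteriorAlgebra.ιMulti_span]; trivial
  induction hx using Submodule.span_induction with
  | zero => simp
  | add a b _ _ ha hb => simp only [map_add, Finset.sum_add_distrib]; exact add_mem ha hb
  | smul c a _ ha => simp only [map_smul, ← Finset.smul_sum]; exact B.smul_mem ha c
  | mem a ha =>
    obtain ⟨⟨d, v⟩, rfl⟩ := ha
    obtain ⟨c, hc, H⟩ := contr_elt_pow (K := K) (V := V) d
    have h := psum_comm_mem (K := K) (fun g : G => elt (K := K) (fun i => ρ g (v i)))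
      (fun _ _ => elt_comm _ _)
      (Algebra.TensorProduct.map B.val (AlgHom.id K (ExteriorAlgebra K (Fin d → K)))).range
      (fun k hk => by
        simp only [elt_pow]
        rw [Finset.sum_comm]
        refine sum_mem fun f _ => ?_
        rw [← TensorProduct.sum_tmul]
        have := hB k hk (fun i => v (f i))
        simp only [ExteriorAlgebra.map_apply_ιMulti, Function.comp_def] at this
        exact ⟨(⟨_, this⟩ : B) ⊗ₜ[K] ExteriorAlgebra.ιMulti K k
          (fun i => (Pi.single (f i) (1 : K) : Fin d → K)), by simp⟩) d
    have h2 := contr_mem d B _ h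
    rw [map_sum] at h2
    simp only [H] at h2
    rw [← Finset.smul_sum] at h2
    have h3 := B.smul_mem h2 c⁻¹
    rw [smul_smul, inv_mul_cancel₀ hc, one_smul] at h3
    simpa only [ExteriorAlgebra.map_apply_ιMulti, Function.comp_def] using h3

end

end NoetherExt

/-- **Noether's Degree Bound for the exterior algebra.**
Let `K` be a field of characteristic zero, `G` a finite group acting
`K`-linearly on a finite-dimensional `K`-vector space `V`, inducing an action
on the exterior algebra `Λ(V)` by degree-preserving algebra automorphisms.
Then the fixed subalgebra `Λ(V)^G` is generated as a `K`-algebra by its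
elements of degree at most `|G|`, i.e. by `Λ(V)^G ∩ (⊕_{d ≤ |G|} Λ^d(V))`. -/
theorem noether_degree_bound_exterior_algebra
    (K : Type*) [Field K] [CharZero K]
    (G : Type*) [Group G] [Fintype G]
    (V : Type*) [AddCommGroup V] [Module K V] [FiniteDimensional K V]
    (ρ : Representation K G V) :
    ∀ x : ExteriorAlgebra K V,
      x ∈ Algebra.adjoin K
          {y : ExteriorAlgebra K V |
            (∀ g : G, ExteriorAlgebra.map (ρ g) y = y) ∧
            y ∈ (⨆ d ∈ Set.Iic (Fintype.card G), ⋀[K]^d V : Submodule K (ExteriorAlgebra K V))}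
        ↔ ∀ g : G, ExteriorAlgebra.map (ρ g) x = x := by
  intro x
  constructor
  · intro hx g
    have : Algebra.adjoin K {y : ExteriorAlgebra K V |
            (∀ g : G, ExteriorAlgebra.map (ρ g) y = y) ∧
            y ∈ (⨆ d ∈ Set.Iic (Fintype.card G), ⋀[K]^d V : Submodule K (ExteriorAlgebra K V))}
        ≤ AlgHom.equalizer (ExteriorAlgebra.map (ρ g)) (AlgHom.id K _) := by
      rw [Algebra.adjoin_le_iff]
      exact fun y hy => hy.1 g
    exact this hx
  · intro hx
    have h := NoetherExt.transfer_mem ρ (Algebra.adjoin K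
          {y : ExteriorAlgebra K V |
            (∀ g : G, ExteriorAlgebra.map (ρ g) y = y) ∧
            y ∈ (⨆ d ∈ Set.Iic (Fintype.card G), ⋀[K]^d V : Submodule K (ExteriorAlgebra K V))})
      (fun k hk v => Algebra.subset_adjoin ⟨NoetherExt.sum_inv ρ _, by
        refine sum_mem fun g _ => ?_
        refine Submodule.mem_iSup_of_mem k (Submodule.mem_iSup_of_mem hk ?_)
        rw [ExteriorAlgebra.map_apply_ιMulti]
        exact ExteriorAlgebra.ιMulti_range K k ⟨_, rfl⟩⟩) x
    simp only [hx, Finset.sum_const, Finset.card_univ] at h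
    have h0 : (Fintype.card G : K) ≠ 0 := Nat.cast_ne_zero.2 Fintype.card_ne_zero
    have h3 := Subalgebra.smul_mem _ h (Fintype.card G : K)⁻¹
    rwa [← Nat.cast_smul_eq_nsmul K, smul_smul, inv_mul_cancel₀ h0, one_smul] at h3
end

section
/- Let K be a field of characteristic zero, let V be a finite-dimensional K-vector space, and let L_1, …, L_t be linear subspaces of V. For each i, let J_i be the two-sided ideal of the exterior algebra Λ(V) generated by the degree-one elements ι(L_i) (the image of L_i under the canonical inclusion ι : V → Λ(V)). Then the intersection ideal J_1 ∩ J_2 ∩ ⋯ ∩ J_t is generated by its homogeneous elements of degree at most t. -/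
namespace SubArr

open ExteriorAlgebra MvPolynomial

section basic

variable {K : Type*} [Field K] {V : Type*} [AddCommGroup V] [Module K V]

/-- contraction with a functional -/
noncomputable def ctr (f : Module.Dual K V) : ExteriorAlgebra K V →ₗ[K] ExteriorAlgebra K V :=
  CliffordAlgebra.contractLeft f

lemma ctr_mul (f : Module.Dual K V) (v : V) (a : ExteriorAlgebra K V) :
    ctr f (ι K v * a) = f v • a - ι K v * ctr f a :=
  CliffordAlgebra.contractLeft_ι_mul f v a

lemma ctr_ctr (f : Module.Dual K V) (a : ExteriorAlgebra K V) : ctr f (ctr f a) = 0 :=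
  CliffordAlgebra.contractLeft_contractLeft f a

lemma ctr_comm (f g : Module.Dual K V) (a : ExteriorAlgebra K V) :
    ctr f (ctr g a) = - ctr g (ctr f a) :=
  CliffordAlgebra.contractLeft_comm f g a

lemma ctr_alg (f : Module.Dual K V) (r : K) :
    ctr f (algebraMap K (ExteriorAlgebra K V) r) = 0 :=
  CliffordAlgebra.contractLeft_algebraMap _ f r

lemma mul_anti (v w : V) (a : ExteriorAlgebra K V) :
    ι K v * (ι K w * a) = - (ι K w * (ι K v * a)) := by
  have h : ι K v * ι K w = - (ι K w * ι K v) := by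
    have := ι_add_mul_swap (R := K) v w
    exact eq_neg_of_add_eq_zero_left this
  rw [← mul_assoc, h, ← mul_assoc, neg_mul]

lemma mul_self_zero (v : V) (a : ExteriorAlgebra K V) : ι K v * (ι K v * a) = 0 := by
  rw [← mul_assoc, ι_sq_zero, zero_mul]

/-- degree -/
noncomputable def dg (K : Type*) [Field K] (V : Type*) [AddCommGroup V] [Module K V] (j : ℤ) :
    Submodule K (ExteriorAlgebra K V) :=
  if 0 ≤ j then ⋀[K]^(j.toNat) V else ⊥

lemma dg_nat (j : ℕ) : dg K V (j : ℤ) = ⋀[K]^j V := by simp [dg]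

lemma dg_neg {j : ℤ} (h : j < 0) : dg K V j = ⊥ := by simp [dg, h]

lemma mul_dg {j : ℤ} (v : V) {a : ExteriorAlgebra K V} (h : a ∈ dg K V j) :
    ι K v * a ∈ dg K V (j + 1) := by
  rcases lt_or_ge j 0 with hj | hj
  · rw [dg_neg hj] at h
    have : a = 0 := by simpa using h
    simp [this]
  · obtain ⟨n, rfl⟩ := Int.eq_ofNat_of_zero_le hj
    rw [dg_nat] at h
    rw [show ((n : ℤ) + 1) = ((n + 1 : ℕ) : ℤ) by push_cast; rfl, dg_nat, exteriorPower, pow_succ']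
    exact Submodule.mul_mem_mul ⟨v, rfl⟩ h

lemma ctr_dg {j : ℤ} (f : Module.Dual K V) {a : ExteriorAlgebra K V} (h : a ∈ dg K V j) :
    ctr f a ∈ dg K V (j - 1) := by
  rcases lt_or_ge j 0 with hj | hj
  · rw [dg_neg hj] at h
    have : a = 0 := by simpa using h
    simp [this]
  · obtain ⟨n, rfl⟩ := Int.eq_ofNat_of_zero_le hj
    rw [dg_nat] at h
    refine Submodule.pow_induction_on_left' (C := fun n a _ => ctr f a ∈ dg K V ((n : ℤ) - 1)) _
      ?_ ?_ ?_ h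
    · intro r
      rw [ctr_alg]; exact Submodule.zero_mem _
    · intro x y i _ _ hx hy
      rw [map_add]; exact Submodule.add_mem _ hx hy
    · rintro m ⟨v, rfl⟩ i x hx ih
      rw [ctr_mul]
      refine Submodule.sub_mem _ (Submodule.smul_mem _ _ ?_) ?_
      · have : x ∈ dg K V (i : ℤ) := by rw [dg_nat]; exact hx
        simpa using this
      · have := mul_dg v ih
        simpa using this

lemma euler {n : ℕ} (x : Module.Basis (Fin n) K V) {j : ℕ} {a : ExteriorAlgebra K V}
    (h : a ∈ ⋀[K]^j V) : ∑ b, ι K (x b) * ctr (x.coord b) a = (j : K) • a := by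
  refine Submodule.pow_induction_on_left'
    (C := fun j a _ => ∑ b, ι K (x b) * ctr (x.coord b) a = (j : K) • a) _ ?_ ?_ ?_ h
  · intro r; simp [ctr_alg]
  · intro y z i _ _ hy hz
    simp only [map_add, mul_add, Finset.sum_add_distrib, hy, hz, smul_add]
  · rintro m ⟨v, rfl⟩ i y hy ih
    simp only [ctr_mul, mul_sub, Finset.sum_sub_distrib]
    have h1 : ∑ b, ι K (x b) * (x.coord b v • y) = ι K v * y := by
      conv_rhs => rw [← x.sum_repr v]
      rw [map_sum, Finset.sum_mul]
      refine Finset.sum_congr rfl fun b _ => ?_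
      simp
    have h2 : ∑ b, ι K (x b) * (ι K v * ctr (x.coord b) y) = - (ι K v * ((i : K) • y)) := by
      rw [← ih, Finset.mul_sum, ← Finset.sum_neg_distrib]
      exact Finset.sum_congr rfl fun b _ => mul_anti _ _ _
    rw [h1, h2, sub_neg_eq_add, mul_smul_comm]
    push_cast
    rw [add_smul, one_smul, add_comm]

/-- the ideal generated by a subspace, as a subspace -/
def U (L : Submodule K V) : Submodule K (ExteriorAlgebra K V) :=
  Submodule.span K {y | ∃ l ∈ L, ∃ a, y = ι K l * a}

lemma mul_U' {L : Submodule K V} {l : V} (hl : l ∈ L) (a : ExteriorAlgebra K V) :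
    ι K l * a ∈ U L := Submodule.subset_span ⟨l, hl, a, rfl⟩

lemma mul_U {L : Submodule K V} (v : V) {a : ExteriorAlgebra K V} (h : a ∈ U L) :
    ι K v * a ∈ U L := by
  refine Submodule.span_induction (p := fun a _ => ι K v * a ∈ U L) ?_ ?_ ?_ ?_ h
  · rintro _ ⟨l, hl, a, rfl⟩
    rw [mul_anti]
    exact Submodule.neg_mem _ (mul_U' hl _)
  · simp
  · intro y z _ _ hy hz; rw [mul_add]; exact Submodule.add_mem _ hy hz
  · intro r y _ hy; rw [mul_smul_comm]; exact Submodule.smul_mem _ _ hy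

lemma ctr_U {L : Submodule K V} {f : Module.Dual K V} (hf : ∀ l ∈ L, f l = 0)
    {a : ExteriorAlgebra K V} (h : a ∈ U L) : ctr f a ∈ U L := by
  refine Submodule.span_induction (p := fun a _ => ctr f a ∈ U L) ?_ ?_ ?_ ?_ h
  · rintro _ ⟨l, hl, a, rfl⟩
    rw [ctr_mul, hf l hl, zero_smul, zero_sub]
    exact Submodule.neg_mem _ (mul_U' hl _)
  · simp
  · intro y z _ _ hy hz; rw [map_add]; exact Submodule.add_mem _ hy hz
  · intro r y _ hy; rw [map_smul]; exact Submodule.smul_mem _ _ hy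

lemma mul_U_left {L : Submodule K V} (b : ExteriorAlgebra K V) : ∀ {a : ExteriorAlgebra K V},
    a ∈ U L → b * a ∈ U L := by
  induction b using ExteriorAlgebra.induction with
  | algebraMap r => intro a h; rw [← Algebra.smul_def]; exact Submodule.smul_mem _ _ h
  | ι v => intro a h; exact mul_U v h
  | mul x y hx hy => intro a h; rw [mul_assoc]; exact hx (hy h)
  | add x y hx hy => intro a h; rw [add_mul]; exact Submodule.add_mem _ (hx h) (hy h)

lemma mul_U_right {L : Submodule K V} (b : ExteriorAlgebra K V) {a : ExteriorAlgebra K V}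
    (h : a ∈ U L) : a * b ∈ U L := by
  refine Submodule.span_induction (p := fun a _ => a * b ∈ U L) ?_ ?_ ?_ ?_ h
  · rintro _ ⟨l, hl, a, rfl⟩
    rw [mul_assoc]; exact mul_U' hl _
  · simp
  · intro y z _ _ hy hz; rw [add_mul]; exact Submodule.add_mem _ hy hz
  · intro r y _ hy; rw [smul_mul_assoc]; exact Submodule.smul_mem _ _ hy

lemma mem_span_iff_U (L : Submodule K V) (a : ExteriorAlgebra K V) :
    a ∈ TwoSidedIdeal.span (ι K '' (L : Set V)) ↔ a ∈ U L := by
  constructor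
  · intro h
    refine TwoSidedIdeal.span_induction (p := fun a _ => a ∈ U L) ?_ ?_ ?_ ?_ ?_ ?_ h
    · rintro _ ⟨l, hl, rfl⟩
      have := mul_U' (K := K) hl 1
      rwa [mul_one] at this
    · exact Submodule.zero_mem _
    · intro x y _ _; exact Submodule.add_mem _
    · intro x _; exact Submodule.neg_mem _
    · intro b x _ hx; exact mul_U_left b hx
    · intro b x _ hx; exact mul_U_right b hx
  · intro h
    refine Submodule.span_induction
      (p := fun a _ => a ∈ TwoSidedIdeal.span (ι K '' (L : Set V))) ?_ ?_ ?_ ?_ h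
    · rintro _ ⟨l, hl, a, rfl⟩
      exact TwoSidedIdeal.mul_mem_right _ _ _ (TwoSidedIdeal.subset_span ⟨l, hl, rfl⟩)
    · exact TwoSidedIdeal.zero_mem _
    · intro x y _ _; exact TwoSidedIdeal.add_mem _
    · intro r x _ hx
      rw [Algebra.smul_def]; exact TwoSidedIdeal.mul_mem_left _ _ _ hx

lemma proj_U {L : Submodule K V} {a : ExteriorAlgebra K V} (h : a ∈ U L) (n : ℕ) :
    GradedRing.proj (fun i : ℕ => ⋀[K]^i V) n a ∈ U L := by
  refine Submodule.span_induction
    (p := fun a _ => GradedRing.proj (fun i : ℕ => ⋀[K]^i V) n a ∈ U L) ?_ ?_ ?_ ?_ h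
  · rintro _ ⟨l, hl, a, rfl⟩
    have hl1 : ι K l ∈ ⋀[K]^1 V := by
      rw [exteriorPower, pow_one]; exact ⟨l, rfl⟩
    rw [GradedRing.proj_apply]
    cases n with
    | zero =>
      rw [DirectSum.coe_decompose_mul_of_left_mem_of_not_le (fun i : ℕ => ⋀[K]^i V) hl1 (by simp)]
      exact Submodule.zero_mem _
    | succ n =>
      rw [DirectSum.coe_decompose_mul_of_left_mem_of_le (fun i : ℕ => ⋀[K]^i V) hl1 (by simp)]
      exact mul_U' hl _
  · rw [map_zero]; exact Submodule.zero_mem _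
  · intro y z _ _ hy hz; rw [map_add]; exact Submodule.add_mem _ hy hz
  · intro r y _ hy
    rw [GradedRing.proj_apply] at hy ⊢
    rw [DirectSum.decompose_smul]
    exact Submodule.smul_mem _ _ hy

end basic

section forms

variable {K : Type*} [Field K] {V : Type*} [AddCommGroup V] [Module K V] {n t : ℕ}

/-- coefficients: in all the ideals indexed by `T`, of degree `j`, killed by contractions in `Y`. -/
noncomputable def W (x : Module.Basis (Fin n) K V) (L : Fin t → Submodule K V) (T : Finset (Fin t))
    (j : ℤ) (Y : Finset (Fin n)) : Submodule K (ExteriorAlgebra K V) :=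
  (⨅ i ∈ T, U (L i)) ⊓ dg K V j ⊓ ⨅ b ∈ Y, LinearMap.ker (ctr (x.coord b))

lemma mem_W {x : Module.Basis (Fin n) K V} {L : Fin t → Submodule K V} {T : Finset (Fin t)}
    {j : ℤ} {Y : Finset (Fin n)} {a : ExteriorAlgebra K V} :
    a ∈ W x L T j Y ↔ (∀ i ∈ T, a ∈ U (L i)) ∧ a ∈ dg K V j ∧ ∀ b ∈ Y, ctr (x.coord b) a = 0 := by
  simp [W, Submodule.mem_iInf, and_assoc]

/-- exactness of the complex of forms in degree `j` -/
def Ex (x : Module.Basis (Fin n) K V) (L : Fin t → Submodule K V) (T : Finset (Fin t))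
    (j : ℤ) (Y : Finset (Fin n)) : Prop :=
  ∀ ω : MvPolynomial (Fin n) K →ₗ[K] ExteriorAlgebra K V,
    (∀ r, ω r ∈ W x L T j Y) → (∀ b ∈ Y, ∀ r, ω (X b * r) = 0) →
    (∀ r, ∑ a, ι K (x a) * ω (X a * r) = 0) →
    ∃ η : MvPolynomial (Fin n) K →ₗ[K] ExteriorAlgebra K V,
      (∀ r, η r ∈ W x L T (j - 1) Y) ∧ (∀ b ∈ Y, ∀ r, η (X b * r) = 0) ∧
      (∀ r, ∑ a, ι K (x a) * η (X a * r) = ω r)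

/-- linear substitution -/
noncomputable def subst (x x' : Module.Basis (Fin n) K V) :
    MvPolynomial (Fin n) K →ₐ[K] MvPolynomial (Fin n) K :=
  aeval (fun c => ∑ a, x'.repr (x a) c • (X a : MvPolynomial (Fin n) K))

lemma subst_X (x x' : Module.Basis (Fin n) K V) (c : Fin n) :
    subst x x' (X c) = ∑ a, x'.repr (x a) c • (X a : MvPolynomial (Fin n) K) := by
  simp [subst]

lemma subst_subst (x x' : Module.Basis (Fin n) K V) (r : MvPolynomial (Fin n) K) :
    subst x x' (subst x' x r) = r := by
  have : (subst x x').comp (subst x' x) = AlgHom.id K _ := by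
    refine MvPolynomial.algHom_ext fun c => ?_
    simp only [AlgHom.comp_apply, subst_X, map_sum, map_smul, AlgHom.id_apply, Finset.smul_sum,
      smul_smul]
    rw [Finset.sum_comm]
    simp only [← Finset.sum_smul]
    have h : ∀ a, ∑ d, x.repr (x' d) c * x'.repr (x a) d = if a = c then 1 else 0 := by
      intro a
      have h1 := congrArg (fun v => x.repr v c) (x'.sum_repr (x a))
      simp only [map_sum, map_smul, Finsupp.coe_finsetSum, Finset.sum_apply, Finsupp.smul_apply,
        smul_eq_mul, Module.Basis.repr_self, Finsupp.single_apply] at h1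
      rw [← h1]
      exact Finset.sum_congr rfl fun d _ => mul_comm _ _
    simp [h]
  exact congrArg (fun g => g r) this

lemma subst_d (x x' : Module.Basis (Fin n) K V)
    (ω : MvPolynomial (Fin n) K →ₗ[K] ExteriorAlgebra K V) (r : MvPolynomial (Fin n) K) :
    ∑ c, ι K (x' c) * ω (subst x x' (X c * r)) = ∑ a, ι K (x a) * ω (X a * subst x x' r) := by
  simp only [map_mul, subst_X, Finset.sum_mul, map_sum, smul_mul_assoc, map_smul, Finset.mul_sum,
    mul_smul_comm]
  rw [Finset.sum_comm]
  refine Finset.sum_congr rfl fun a _ => ?_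
  conv_rhs => rw [← x'.sum_repr (x a)]
  rw [map_sum, Finset.sum_mul]
  refine Finset.sum_congr rfl fun b _ => ?_
  simp

lemma Ex_change (x x' : Module.Basis (Fin n) K V) (L : Fin t → Submodule K V) (T : Finset (Fin t))
    (j : ℤ) (h : Ex x' L T j ∅) : Ex x L T j ∅ := by
  intro ω hω _ hd
  obtain ⟨η, h1, -, h3⟩ := h (ω ∘ₗ (subst x x').toLinearMap)
    (fun r => by have := hω (subst x x' r); rw [mem_W] at this ⊢; simpa using this)
    (by simp) (fun r => by
      have := subst_d x x' ω r
      simp only [LinearMap.comp_apply, AlgHom.toLinearMap_apply]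
      rw [this, hd])
  refine ⟨η ∘ₗ (subst x' x).toLinearMap, fun r => ?_, by simp, fun r => ?_⟩
  · have := h1 (subst x' x r); rw [mem_W] at this ⊢; simpa using this
  · have := subst_d x' x η r
    simp only [LinearMap.comp_apply, AlgHom.toLinearMap_apply]
    rw [this, h3]
    simp [subst_subst]

/-- division by a variable -/
noncomputable def sh (b : Fin n) : MvPolynomial (Fin n) K →ₗ[K] MvPolynomial (Fin n) K where
  toFun r := divMonomial r (Finsupp.single b 1)
  map_add' p q := add_divMonomial p q _
  map_smul' c p := by
    ext s; simp [coeff_divMonomial]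

lemma sh_X_self (b : Fin n) (r : MvPolynomial (Fin n) K) : sh b (X b * r) = r :=
  X_mul_divMonomial b r

lemma sh_X_ne {a b : Fin n} (h : a ≠ b) (r : MvPolynomial (Fin n) K) :
    sh b (X a * r) = X a * sh b r := by
  show divMonomial (X a * r) (Finsupp.single b 1) = X a * divMonomial r (Finsupp.single b 1)
  ext s
  rw [coeff_divMonomial, coeff_X_mul', coeff_X_mul', coeff_divMonomial]
  have hs : a ∈ (Finsupp.single b 1 + s).support ↔ a ∈ s.support := by
    simp [Finsupp.single_apply, h.symm]
  simp only [hs]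
  split_ifs with h1
  · congr 1
    ext c
    simp only [Finsupp.coe_tsub, Finsupp.coe_add, Pi.sub_apply, Pi.add_apply, Finsupp.single_apply]
    split_ifs with h2 h3 h3
    · exact absurd (h3.trans h2.symm) h
    · omega
    · omega
    · omega
  · rfl

/-- remainder of division by a variable -/
noncomputable def md (b : Fin n) : MvPolynomial (Fin n) K →ₗ[K] MvPolynomial (Fin n) K :=
  LinearMap.id - LinearMap.mulLeft K (X b) ∘ₗ sh b

lemma md_apply (b : Fin n) (r : MvPolynomial (Fin n) K) : md b r = r - X b * sh b r := rfl

lemma md_X_self (b : Fin n) (r : MvPolynomial (Fin n) K) : md b (X b * r) = 0 := by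
  rw [md_apply, sh_X_self, sub_self]

lemma md_X_ne {a b : Fin n} (h : a ≠ b) (r : MvPolynomial (Fin n) K) :
    md b (X a * r) = X a * md b r := by
  rw [md_apply, md_apply, sh_X_ne h]; ring

variable (x : Module.Basis (Fin n) K V) (L : Fin t → Submodule K V) (T : Finset (Fin t))

/-- left multiplication by a vector -/
noncomputable def lm (v : V) : ExteriorAlgebra K V →ₗ[K] ExteriorAlgebra K V :=
  LinearMap.mulLeft K (ι K v)

/-- projection to forms not involving the variable `b` -/
noncomputable def pr (b : Fin n) (ω : MvPolynomial (Fin n) K →ₗ[K] ExteriorAlgebra K V) :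
    MvPolynomial (Fin n) K →ₗ[K] ExteriorAlgebra K V :=
  ctr (x.coord b) ∘ₗ lm (x b) ∘ₗ ω ∘ₗ md b

/-- homotopy -/
noncomputable def hm (b : Fin n) (ω : MvPolynomial (Fin n) K →ₗ[K] ExteriorAlgebra K V) :
    MvPolynomial (Fin n) K →ₗ[K] ExteriorAlgebra K V :=
  ctr (x.coord b) ∘ₗ ω ∘ₗ sh b

lemma pr_apply (b : Fin n) (ω : MvPolynomial (Fin n) K →ₗ[K] ExteriorAlgebra K V) (r) :
    pr x b ω r = ctr (x.coord b) (ι K (x b) * ω (md b r)) := rfl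

lemma hm_apply (b : Fin n) (ω : MvPolynomial (Fin n) K →ₗ[K] ExteriorAlgebra K V) (r) :
    hm x b ω r = ctr (x.coord b) (ω (sh b r)) := rfl

lemma ctr_self (b : Fin n) (a : ExteriorAlgebra K V) :
    ctr (x.coord b) (ι K (x b) * a) = a - ι K (x b) * ctr (x.coord b) a := by
  rw [ctr_mul]; simp

lemma ctr_ne {b c : Fin n} (h : c ≠ b) (a : ExteriorAlgebra K V) :
    ctr (x.coord b) (ι K (x c) * a) = - (ι K (x c) * ctr (x.coord b) a) := by
  rw [ctr_mul]; simp [Finsupp.single_apply, h]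

lemma pr_d (b : Fin n) (ω : MvPolynomial (Fin n) K →ₗ[K] ExteriorAlgebra K V) (r) :
    ∑ a, ι K (x a) * pr x b ω (X a * r) =
      ctr (x.coord b) (ι K (x b) * ∑ a, ι K (x a) * ω (X a * md b r)) := by
  rw [Finset.mul_sum, map_sum]
  refine Finset.sum_congr rfl fun a _ => ?_
  rw [pr_apply]
  by_cases h : a = b
  · subst h
    rw [md_X_self, mul_self_zero]; simp
  · rw [md_X_ne h, mul_anti, map_neg, ctr_ne x h, neg_neg]

lemma hm_d (b : Fin n) (ω : MvPolynomial (Fin n) K →ₗ[K] ExteriorAlgebra K V) (r) :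
    ∑ a, ι K (x a) * hm x b ω (X a * r) +
      ctr (x.coord b) (∑ a, ι K (x a) * ω (X a * sh b r)) = ω r - pr x b ω r := by
  rw [map_sum, ← Finset.sum_add_distrib, Finset.sum_eq_single b]
  · rw [hm_apply, sh_X_self, pr_apply, ctr_self, ctr_self, md_apply]
    simp only [map_sub, mul_sub]
    abel
  · intro a _ h
    rw [hm_apply, sh_X_ne h, ctr_ne x h, add_neg_cancel]
  · simp

variable {x L T}

lemma pr_mem {b : Fin n} {Y : Finset (Fin n)} (hbT : ∀ i ∈ T, ∀ l ∈ L i, x.coord b l = 0) {j : ℤ}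
    (hb : b ∉ Y)
    {ω : MvPolynomial (Fin n) K →ₗ[K] ExteriorAlgebra K V} (hω : ∀ r, ω r ∈ W x L T j Y)
    (hY : ∀ b ∈ Y, ∀ r, ω (X b * r) = 0) :
    (∀ r, pr x b ω r ∈ W x L T j (insert b Y)) ∧
      (∀ c ∈ insert b Y, ∀ r, pr x b ω (X c * r) = 0) := by
  refine ⟨fun r => ?_, fun c hc r => ?_⟩
  · have h := hω (md b r)
    rw [mem_W] at h ⊢
    rw [pr_apply]
    refine ⟨fun i hi => ctr_U (hbT i hi) (mul_U _ (h.1 i hi)), ?_, ?_⟩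
    · have := ctr_dg (x.coord b) (mul_dg (x b) h.2.1)
      simpa using this
    · intro c hc
      rcases Finset.mem_insert.1 hc with rfl | hc
      · exact ctr_ctr _ _
      · have hcb : b ≠ c := fun e => hb (e ▸ hc)
        rw [ctr_comm, ctr_ne x hcb, h.2.2 c hc]; simp
  · rw [pr_apply]
    rcases Finset.mem_insert.1 hc with rfl | hc
    · rw [md_X_self]; simp
    · have hcb : c ≠ b := fun e => hb (e ▸ hc)
      rw [md_X_ne hcb, hY c hc]; simp

lemma hm_mem {b : Fin n} {Y : Finset (Fin n)} (hbT : ∀ i ∈ T, ∀ l ∈ L i, x.coord b l = 0) {j : ℤ}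
    (hb : b ∉ Y)
    {ω : MvPolynomial (Fin n) K →ₗ[K] ExteriorAlgebra K V} (hω : ∀ r, ω r ∈ W x L T j Y)
    (hY : ∀ b ∈ Y, ∀ r, ω (X b * r) = 0) :
    (∀ r, hm x b ω r ∈ W x L T (j - 1) Y) ∧
      (∀ c ∈ Y, ∀ r, hm x b ω (X c * r) = 0) := by
  refine ⟨fun r => ?_, fun c hc r => ?_⟩
  · have h := hω (sh b r)
    rw [mem_W] at h ⊢
    rw [hm_apply]
    refine ⟨fun i hi => ctr_U (hbT i hi) (h.1 i hi), ctr_dg _ h.2.1, ?_⟩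
    intro c hc
    rw [ctr_comm, h.2.2 c hc]; simp
  · rw [hm_apply]
    have hcb : c ≠ b := fun e => hb (e ▸ hc)
    rw [sh_X_ne hcb, hY c hc]; simp

lemma W_mono {j : ℤ} {Y Y' : Finset (Fin n)} (h : Y ⊆ Y') : W x L T j Y' ≤ W x L T j Y := by
  intro a ha
  rw [mem_W] at ha ⊢
  exact ⟨ha.1, ha.2.1, fun b hb => ha.2.2 b (h hb)⟩

lemma Ex_insert {b : Fin n} {Y : Finset (Fin n)} (hbT : ∀ i ∈ T, ∀ l ∈ L i, x.coord b l = 0)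
    {j : ℤ} (hb : b ∉ Y) : Ex x L T j Y ↔ Ex x L T j (insert b Y) := by
  constructor
  · intro h ω hω hY hd
    obtain ⟨η, h1, h2, h3⟩ := h ω (fun r => W_mono (Finset.subset_insert _ _) (hω r))
      (fun c hc => hY c (Finset.mem_insert_of_mem hc)) hd
    obtain ⟨g1, g2⟩ := pr_mem hbT hb h1 h2
    refine ⟨pr x b η, g1, g2, fun r => ?_⟩
    rw [pr_d, h3, ctr_self, (mem_W.1 (hω _)).2.2 b (Finset.mem_insert_self _ _), md_apply, map_sub,
      hY b (Finset.mem_insert_self _ _)]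
    simp
  · intro h ω hω hY hd
    obtain ⟨g1, g2⟩ := pr_mem hbT hb hω hY
    obtain ⟨k1, k2⟩ := hm_mem hbT hb hω hY
    obtain ⟨η, h1, h2, h3⟩ := h (pr x b ω) g1 g2 (fun r => by rw [pr_d, hd]; simp)
    refine ⟨η + hm x b ω, fun r => ?_, fun c hc r => ?_, fun r => ?_⟩
    · exact Submodule.add_mem _ (W_mono (Finset.subset_insert _ _) (h1 r)) (k1 r)
    · rw [LinearMap.add_apply, h2 c (Finset.mem_insert_of_mem hc), k2 c hc, add_zero]
    · have := hm_d x b ω r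
      rw [hd, map_zero, add_zero] at this
      simp only [LinearMap.add_apply, mul_add, Finset.sum_add_distrib]
      rw [this, h3]; abel

lemma Ex_iff {Y : Finset (Fin n)} (hT : ∀ b ∈ Y, ∀ i ∈ T, ∀ l ∈ L i, x.coord b l = 0)
    {j : ℤ} : Ex x L T j ∅ ↔ Ex x L T j Y := by
  induction Y using Finset.induction_on with
  | empty => rfl
  | insert b Y hb ih =>
    rw [ih fun c hc => hT c (Finset.mem_insert_of_mem hc)]
    exact Ex_insert (hT b (Finset.mem_insert_self _ _)) hb

lemma Ex_empty [CharZero K] (x : Module.Basis (Fin n) K V) (L : Fin t → Submodule K V)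
    {j : ℤ} (hj : 0 < j) : Ex x L ∅ j ∅ := by
  rw [Ex_iff (Y := Finset.univ) (by simp)]
  intro ω hω hY hd
  refine ⟨0, fun r => Submodule.zero_mem _, by simp, fun r => ?_⟩
  have h := mem_W.1 (hω r)
  obtain ⟨m, rfl⟩ := Int.eq_ofNat_of_zero_le hj.le
  have h1 := h.2.1
  rw [dg_nat] at h1
  have h2 := euler x h1
  have h3 : ∑ b, ι K (x b) * ctr (x.coord b) (ω r) = 0 :=
    Finset.sum_eq_zero fun b _ => by rw [h.2.2 b (Finset.mem_univ b), mul_zero]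
  rw [h3] at h2
  have hm : (m : K) ≠ 0 := by
    have : m ≠ 0 := by rintro rfl; simp at hj
    exact_mod_cast this
  have h4 : ω r = 0 := (smul_eq_zero.1 h2.symm).resolve_left hm
  simp [h4]

end forms

section cube

variable {K : Type*} [Field K] {M : Type*} [AddCommGroup M] [Module K M] {t : ℕ}

/-- sign -/
def sg (K : Type*) [Field K] {t : ℕ} (i : Fin t) (S : Finset (Fin t)) : K :=
  (-1) ^ ((S.filter (· < i)).card)

/-- relative sign -/
def ch (K : Type*) [Field K] {t : ℕ} (j i : Fin t) : K := if j < i then -1 else 1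

lemma sg_sq (i : Fin t) (S : Finset (Fin t)) : sg K i S * sg K i S = 1 := by
  rw [sg, ← mul_pow]; simp

lemma sg_insert {i j : Fin t} {S : Finset (Fin t)} (h : j ∉ S) :
    sg K i (insert j S) = ch K j i * sg K i S := by
  rw [sg, sg, ch, Finset.filter_insert]
  split_ifs with h1
  · rw [Finset.card_insert_of_notMem (by simp [h]), pow_succ]; ring
  · simp

lemma ch_sq (i j : Fin t) : ch K j i * ch K j i = 1 := by
  rw [ch]; split_ifs <;> simp

lemma sg_erase {i j : Fin t} {S : Finset (Fin t)} (h : j ∈ S) :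
    sg K i (S.erase j) = ch K j i * sg K i S := by
  have := sg_insert (K := K) (i := i) (Finset.notMem_erase j S)
  rw [Finset.insert_erase h] at this
  rw [this, ← mul_assoc, ch_sq, one_mul]

lemma ch_self (i : Fin t) : ch K i i = 1 := by simp [ch]

lemma ch_add {i j : Fin t} (h : i ≠ j) : ch K i j + ch K j i = 0 := by
  rcases lt_or_gt_of_ne h with h | h
  · simp [ch, h, h.le.not_gt]
  · simp [ch, h, h.le.not_gt]

/-- creation -/
noncomputable def eps (K : Type*) [Field K] {M : Type*} [AddCommGroup M] [Module K M] {t : ℕ}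
    (i : Fin t) : (Finset (Fin t) → M) →ₗ[K] (Finset (Fin t) → M) :=
  LinearMap.pi fun S => if i ∈ S then sg K i S • LinearMap.proj (S.erase i) else 0

/-- annihilation -/
noncomputable def cc (K : Type*) [Field K] {M : Type*} [AddCommGroup M] [Module K M] {t : ℕ}
    (i : Fin t) : (Finset (Fin t) → M) →ₗ[K] (Finset (Fin t) → M) :=
  LinearMap.pi fun S => if i ∈ S then 0 else sg K i S • LinearMap.proj (insert i S)

/-- parity -/
noncomputable def par (K : Type*) [Field K] {M : Type*} [AddCommGroup M] [Module K M] {t : ℕ} :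
    (Finset (Fin t) → M) →ₗ[K] (Finset (Fin t) → M) :=
  LinearMap.pi fun S => ((-1 : K) ^ S.card) • LinearMap.proj S

lemma eps_apply (i : Fin t) (ξ : Finset (Fin t) → M) (S : Finset (Fin t)) :
    eps K i ξ S = if i ∈ S then sg K i S • ξ (S.erase i) else 0 := by
  rw [eps, LinearMap.pi_apply]; split_ifs <;> simp

lemma cc_apply (i : Fin t) (ξ : Finset (Fin t) → M) (S : Finset (Fin t)) :
    cc K i ξ S = if i ∈ S then 0 else sg K i S • ξ (insert i S) := by
  rw [cc, LinearMap.pi_apply]; split_ifs <;> simp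

lemma par_apply (ξ : Finset (Fin t) → M) (S : Finset (Fin t)) :
    par K ξ S = ((-1 : K) ^ S.card) • ξ S := by
  simp [par]

lemma par_par (ξ : Finset (Fin t) → M) : par K (par K ξ) = ξ := by
  funext S
  rw [par_apply, par_apply, smul_smul, ← mul_pow]; simp

lemma par_eps (i : Fin t) (ξ : Finset (Fin t) → M) :
    par K (eps K i ξ) = - eps K i (par K ξ) := by
  funext S
  rw [Pi.neg_apply, par_apply, eps_apply, eps_apply]
  split_ifs with h
  · rw [par_apply, smul_smul, smul_smul, ← neg_smul]
    congr 1
    rw [← Finset.card_erase_add_one h, pow_succ]; ring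
  · simp

lemma par_cc (i : Fin t) (ξ : Finset (Fin t) → M) :
    par K (cc K i ξ) = - cc K i (par K ξ) := by
  funext S
  rw [Pi.neg_apply, par_apply, cc_apply, cc_apply]
  split_ifs with h
  · simp
  · rw [par_apply, smul_smul, smul_smul, ← neg_smul]
    congr 1
    rw [Finset.card_insert_of_notMem h, pow_succ]; ring

lemma eps_eps (i j : Fin t) (ξ : Finset (Fin t) → M) :
    eps K i (eps K j ξ) = - eps K j (eps K i ξ) := by
  funext S
  rw [Pi.neg_apply]
  simp only [eps_apply, Finset.mem_erase]
  by_cases hij : i = j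
  · subst hij; simp
  by_cases hi : i ∈ S <;> by_cases hj : j ∈ S <;> simp [hi, hj, hij, Ne.symm hij]
  rw [sg_erase hi, sg_erase hj, smul_smul, smul_smul, Finset.erase_right_comm, ← neg_smul]
  congr 1
  have := ch_add (K := K) hij
  linear_combination (sg K i S * sg K j S) * this

lemma eps_cc_ne {i j : Fin t} (h : i ≠ j) (ξ : Finset (Fin t) → M) :
    eps K i (cc K j ξ) + cc K j (eps K i ξ) = 0 := by
  funext S
  rw [Pi.add_apply, Pi.zero_apply]
  simp only [eps_apply, cc_apply, Finset.mem_erase, Finset.mem_insert]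
  by_cases hi : i ∈ S <;> by_cases hj : j ∈ S <;> simp [hi, hj, h, Ne.symm h]
  rw [sg_erase hi, sg_insert hj, smul_smul, smul_smul, Finset.erase_insert_of_ne (Ne.symm h),
    ← add_smul]
  have := ch_add (K := K) h
  have h2 : sg K i S * (ch K i j * sg K j S) + sg K j S * (ch K j i * sg K i S) = 0 := by
    linear_combination (sg K i S * sg K j S) * this
  rw [h2, zero_smul]

lemma eps_cc_self (i : Fin t) (ξ : Finset (Fin t) → M) :
    eps K i (cc K i ξ) + cc K i (eps K i ξ) = ξ := by
  funext S
  rw [Pi.add_apply]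
  simp only [eps_apply, cc_apply, Finset.mem_erase, Finset.mem_insert]
  by_cases hi : i ∈ S
  · simp only [hi, if_true, ne_eq, not_true_eq_false, false_and, if_false, add_zero]
    rw [sg_erase hi, ch_self, one_mul, smul_smul, sg_sq, one_smul, Finset.insert_erase hi]
  · simp only [hi, if_false, zero_add, true_or, if_true]
    rw [sg_insert hi, ch_self, one_mul, smul_smul, sg_sq, one_smul, Finset.erase_insert hi]

/-- the cube differential -/
noncomputable def dC (K : Type*) [Field K] {M : Type*} [AddCommGroup M] [Module K M] {t : ℕ}
    (T : Finset (Fin t)) : (Finset (Fin t) → M) →ₗ[K] (Finset (Fin t) → M) :=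
  ∑ i ∈ T, eps K i

lemma dC_apply (T : Finset (Fin t)) (ξ : Finset (Fin t) → M) :
    dC K T ξ = ∑ i ∈ T, eps K i ξ := by
  simp [dC]

lemma dC_dC [CharZero K] (T : Finset (Fin t)) (ξ : Finset (Fin t) → M) :
    dC K T (dC K T ξ) = 0 := by
  have h : dC K T (dC K T ξ) = - dC K T (dC K T ξ) := by
    conv_lhs => simp only [dC_apply, map_sum]
    rw [Finset.sum_comm]
    conv_rhs => simp only [dC_apply, map_sum]
    rw [← Finset.sum_neg_distrib]
    refine Finset.sum_congr rfl fun i _ => ?_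
    rw [← Finset.sum_neg_distrib]
    refine Finset.sum_congr rfl fun j _ => eps_eps _ _ _
  have h2 : (2 : K) • dC K T (dC K T ξ) = 0 := by
    rw [two_smul]; nth_rewrite 1 [h]; simp
  exact (smul_eq_zero.1 h2).resolve_left two_ne_zero

lemma par_dC (T : Finset (Fin t)) (ξ : Finset (Fin t) → M) :
    par K (dC K T ξ) = - dC K T (par K ξ) := by
  simp only [dC_apply, map_sum, par_eps, Finset.sum_neg_distrib]

lemma dC_cc {T : Finset (Fin t)} {i : Fin t} (hi : i ∈ T) (ξ : Finset (Fin t) → M) :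
    dC K T (cc K i ξ) + cc K i (dC K T ξ) = ξ := by
  simp only [dC_apply, map_sum]
  rw [← Finset.sum_add_distrib, Finset.sum_eq_single i]
  · exact eps_cc_self i ξ
  · intro j _ h; exact eps_cc_ne h ξ
  · intro h; exact absurd hi h

/-- apply a linear map in every slot -/
noncomputable def mp (t : ℕ) (f : M →ₗ[K] M) : (Finset (Fin t) → M) →ₗ[K] (Finset (Fin t) → M) :=
  LinearMap.pi fun S => f ∘ₗ LinearMap.proj S

lemma mp_apply (f : M →ₗ[K] M) (ξ : Finset (Fin t) → M) (S : Finset (Fin t)) :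
    mp t f ξ S = f (ξ S) := rfl

lemma mp_eps (f : M →ₗ[K] M) (i : Fin t) (ξ : Finset (Fin t) → M) :
    mp t f (eps K i ξ) = eps K i (mp t f ξ) := by
  funext S
  simp only [mp_apply, eps_apply]; split_ifs <;> simp

lemma mp_cc (f : M →ₗ[K] M) (i : Fin t) (ξ : Finset (Fin t) → M) :
    mp t f (cc K i ξ) = cc K i (mp t f ξ) := by
  funext S
  simp only [mp_apply, cc_apply]; split_ifs <;> simp

lemma mp_par (f : M →ₗ[K] M) (ξ : Finset (Fin t) → M) :
    mp t f (par K ξ) = par K (mp t f ξ) := by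
  funext S
  simp only [mp_apply, par_apply, map_smul]

lemma mp_dC (f : M →ₗ[K] M) (T : Finset (Fin t)) (ξ : Finset (Fin t) → M) :
    mp t f (dC K T ξ) = dC K T (mp t f ξ) := by
  simp only [dC_apply, map_sum, mp_eps]

/-- linear lifting -/
lemma exists_lift {M' : Type*} [AddCommGroup M'] [Module K M'] (f : M →ₗ[K] M')
    (P : Submodule K M) (Q : Submodule K M') (h : ∀ q ∈ Q, ∃ p ∈ P, f p = q) :
    ∃ s : M' →ₗ[K] M, ∀ q ∈ Q, s q ∈ P ∧ f (s q) = q := by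
  have h' : ∀ q : Q, ∃ p : (Q.comap f ⊓ P : Submodule K M), f p = q := by
    rintro ⟨q, hq⟩
    obtain ⟨p, hp, e⟩ := h q hq
    exact ⟨⟨p, by simp [e, hq], hp⟩, e⟩
  let g : (Q.comap f ⊓ P : Submodule K M) →ₗ[K] Q :=
    (f ∘ₗ (Q.comap f ⊓ P).subtype).codRestrict Q (fun p => p.2.1)
  have hg : LinearMap.range g = ⊤ := by
    rw [LinearMap.range_eq_top]
    intro q
    obtain ⟨p, hp⟩ := h' q
    exact ⟨p, Subtype.ext hp⟩
  obtain ⟨s, hs⟩ := g.exists_rightInverse_of_surjective hg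
  obtain ⟨s', hs'⟩ := LinearMap.exists_extend ((Q.comap f ⊓ P).subtype ∘ₗ s)
  refine ⟨s', fun q hq => ?_⟩
  have e : s' q = (s ⟨q, hq⟩ : M) := by
    have := congrArg (fun l => l ⟨q, hq⟩) hs'
    simpa using this
  have e2 := congrArg (fun l => (l ⟨q, hq⟩ : M')) hs
  rw [e]
  exact ⟨(s ⟨q, hq⟩).2.2, e2⟩

/-- exponential identity -/
lemma exp_identity [CharZero K] {X : Type*} [AddCommGroup X] [Module K X] (E G H : Module.End K X)
    (h1 : E * G = G * E + H) (h2 : G * H = H * G) (n : ℕ) :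
    ∑ k ∈ Finset.range (n + 1), ((k.factorial : K)⁻¹) • (G ^ k * (E + H)) =
      E * ∑ k ∈ Finset.range (n + 1), ((k.factorial : K)⁻¹) • G ^ k
        + ((n.factorial : K)⁻¹) • (G ^ n * H) := by
  have h3 : ∀ n : ℕ, E * G ^ (n + 1) = G ^ (n + 1) * E + ((n + 1 : ℕ) : K) • (G ^ n * H) := by
    intro n
    induction n with
    | zero => simp [h1]
    | succ n ih =>
      rw [pow_succ G (n + 1), ← mul_assoc, ih, add_mul, mul_assoc, h1, mul_add, smul_mul_assoc,
        mul_assoc (G ^ n) H G, ← h2, ← mul_assoc (G ^ n) G H, ← pow_succ, ← mul_assoc]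
      push_cast
      module
  induction n with
  | zero => simp
  | succ n ih =>
    rw [Finset.sum_range_succ, ih, Finset.sum_range_succ _ (n + 1), mul_add E, mul_smul_comm, h3,
      mul_add, smul_add, smul_add, smul_smul]
    have : ((n + 1).factorial : K)⁻¹ * ((n + 1 : ℕ) : K) = (n.factorial : K)⁻¹ := by
      rw [Nat.factorial_succ]
      push_cast
      have a1 : (n.factorial : K) ≠ 0 := by exact_mod_cast n.factorial_ne_zero
      have a2 : (n : K) + 1 ≠ 0 := by exact_mod_cast Nat.succ_ne_zero n
      field_simp
    rw [this]
    abel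

end cube

section ops

variable {K : Type*} [Field K] {M : Type*} [AddCommGroup M] [Module K M] {n : ℕ}

/-- generic first order operator -/
noncomputable def del (P : Fin n → M →ₗ[K] M) :
    Module.End K (MvPolynomial (Fin n) K →ₗ[K] M) where
  toFun ω := ∑ a, P a ∘ₗ ω ∘ₗ LinearMap.mulLeft K (X a)
  map_add' ω η := by
    ext r
    simp [Finset.sum_add_distrib]
  map_smul' c ω := by
    ext r
    simp [Finset.smul_sum]

lemma del_apply (P : Fin n → M →ₗ[K] M) (ω : MvPolynomial (Fin n) K →ₗ[K] M) (r) :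
    del P ω r = ∑ a, P a (ω (X a * r)) := by
  simp [del, LinearMap.sum_apply]

lemma del_comm (P Q : Fin n → M →ₗ[K] M) (h : ∀ a b m, P a (Q b m) = Q b (P a m)) :
    del P * del Q = del Q * del P := by
  refine LinearMap.ext fun ω => LinearMap.ext fun r => ?_
  simp only [Module.End.mul_apply, del_apply, map_sum]
  rw [Finset.sum_comm]
  refine Finset.sum_congr rfl fun a _ => Finset.sum_congr rfl fun b _ => ?_
  rw [h, mul_left_comm]

lemma del_sq [CharZero K] (P : Fin n → M →ₗ[K] M) (h : ∀ a b m, P a (P b m) = - P b (P a m)) :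
    del P * del P = 0 := by
  refine LinearMap.ext fun ω => LinearMap.ext fun r => ?_
  have e : (del P * del P) ω r = - (del P * del P) ω r := by
    simp only [Module.End.mul_apply, del_apply, map_sum]
    conv_lhs => rw [Finset.sum_comm]
    rw [← Finset.sum_neg_distrib]
    refine Finset.sum_congr rfl fun a _ => ?_
    rw [← Finset.sum_neg_distrib]
    refine Finset.sum_congr rfl fun b _ => ?_
    rw [h, mul_left_comm]
  have h2 : (2 : K) • (del P * del P) ω r = 0 := by
    rw [two_smul]; nth_rewrite 1 [e]; simp
  exact (smul_eq_zero.1 h2).resolve_left two_ne_zero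

/-- postcomposition -/
noncomputable def post (f : M →ₗ[K] M) :
    Module.End K (MvPolynomial (Fin n) K →ₗ[K] M) where
  toFun ω := f ∘ₗ ω
  map_add' ω η := by ext r; simp
  map_smul' c ω := by ext r; simp

lemma post_apply (f : M →ₗ[K] M) (ω : MvPolynomial (Fin n) K →ₗ[K] M) (r) :
    post f ω r = f (ω r) := rfl

end ops

section main

variable {K : Type*} [Field K] {V : Type*} [AddCommGroup V] [Module K V] {n t : ℕ}

lemma lm_apply (v : V) (a : ExteriorAlgebra K V) : lm v a = ι K v * a := rfl

/-- the operators on the cube -/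
noncomputable def Eop (K : Type*) [Field K] (V : Type*) [AddCommGroup V] [Module K V] (n : ℕ)
    (T : Finset (Fin t)) :
    Module.End K (MvPolynomial (Fin n) K →ₗ[K] (Finset (Fin t) → ExteriorAlgebra K V)) :=
  post (dC K T)

/-- the signed exterior differential -/
noncomputable def Hop (t : ℕ) (x : Module.Basis (Fin n) K V) (Y : Finset (Fin n)) :
    Module.End K (MvPolynomial (Fin n) K →ₗ[K] (Finset (Fin t) → ExteriorAlgebra K V)) :=
  del fun a => if a ∈ Y then 0 else par K ∘ₗ mp t (lm (x a))

/-- the homotopy generator -/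
noncomputable def Gop (x : Module.Basis (Fin n) K V) (Y : Finset (Fin n)) (q : Fin n → Fin t) :
    Module.End K (MvPolynomial (Fin n) K →ₗ[K] (Finset (Fin t) → ExteriorAlgebra K V)) :=
  del fun a => if a ∈ Y then 0 else mp t (lm (x a)) ∘ₗ cc K (q a) ∘ₗ par K

lemma mp_anti (v w : V) (ξ : Finset (Fin t) → ExteriorAlgebra K V) :
    mp t (lm v) (mp t (lm w) ξ) = - mp t (lm w) (mp t (lm v) ξ) := by
  funext S
  simp only [mp_apply, lm_apply, Pi.neg_apply]
  exact mul_anti _ _ _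

lemma EG (x : Module.Basis (Fin n) K V) (Y : Finset (Fin n)) (q : Fin n → Fin t)
    (T : Finset (Fin t)) (hq : ∀ a ∉ Y, q a ∈ T) :
    Eop K V n T * Gop x Y q = Gop x Y q * Eop K V n T + Hop t x Y := by
  refine LinearMap.ext fun ω => LinearMap.ext fun r => ?_
  simp only [Module.End.mul_apply, Eop, Gop, Hop, post_apply, del_apply, map_sum,
    LinearMap.add_apply]
  rw [← Finset.sum_add_distrib]
  refine Finset.sum_congr rfl fun a _ => ?_
  split_ifs with h
  · simp
  · simp only [LinearMap.comp_apply]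
    have := dC_cc (K := K) (hq a h) (par K (mp t (lm (x a)) (ω (X a * r))))
    rw [← mp_dC, par_dC, map_neg, map_neg]
    rw [← mp_par, ← mp_dC, ← mp_cc, ← mp_cc, ← mp_dC] at this
    rw [← mp_par, ← this]
    abel

lemma GH (x : Module.Basis (Fin n) K V) (Y : Finset (Fin n)) (q : Fin n → Fin t) :
    Gop x Y q * Hop t x Y = Hop t x Y * Gop x Y q := by
  refine del_comm _ _ fun a b m => ?_
  by_cases ha : a ∈ Y <;> by_cases hb : b ∈ Y <;> simp only [ha, hb, if_true, if_false,
    LinearMap.zero_apply, map_zero, LinearMap.comp_apply]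
  rw [par_par, ← mp_cc, mp_anti, ← mp_par, ← mp_par, par_cc, par_par, map_neg, map_neg]

lemma EE [CharZero K] (T : Finset (Fin t)) : Eop K V n T * Eop K V n T = 0 := by
  refine LinearMap.ext fun ω => LinearMap.ext fun r => ?_
  simp only [Module.End.mul_apply, Eop, post_apply, dC_dC, LinearMap.zero_apply]

lemma HH [CharZero K] (x : Module.Basis (Fin n) K V) (Y : Finset (Fin n)) :
    Hop t x Y * Hop t x Y = 0 := by
  refine del_sq _ fun a b m => ?_
  by_cases ha : a ∈ Y <;> by_cases hb : b ∈ Y <;> simp only [ha, hb, if_true, if_false,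
    LinearMap.zero_apply, map_zero, LinearMap.comp_apply, neg_zero]
  rw [mp_par, par_par, mp_par, par_par, mp_anti]

lemma EH (x : Module.Basis (Fin n) K V) (Y : Finset (Fin n)) (T : Finset (Fin t)) :
    Eop K V n T * Hop t x Y = - (Hop t x Y * Eop K V n T) := by
  refine LinearMap.ext fun ω => LinearMap.ext fun r => ?_
  simp only [Module.End.mul_apply, Eop, Hop, post_apply, del_apply, map_sum,
    LinearMap.neg_apply]
  rw [← Finset.sum_neg_distrib]
  refine Finset.sum_congr rfl fun a _ => ?_
  split_ifs with h
  · simp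
  · simp only [LinearMap.comp_apply]
    rw [mp_dC, par_dC, neg_neg]

lemma DD [CharZero K] (x : Module.Basis (Fin n) K V) (Y : Finset (Fin n)) (T : Finset (Fin t))
    (ω : MvPolynomial (Fin n) K →ₗ[K] (Finset (Fin t) → ExteriorAlgebra K V)) :
    (Eop K V n T + Hop t x Y) ((Eop K V n T + Hop t x Y) ω) = 0 := by
  rw [← Module.End.mul_apply, add_mul, mul_add, mul_add, EE, HH, EH]
  simp

lemma G_nil (x : Module.Basis (Fin n) K V) (Y : Finset (Fin n)) (q : Fin n → Fin t) (k : ℕ)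
    (ω : MvPolynomial (Fin n) K →ₗ[K] (Finset (Fin t) → ExteriorAlgebra K V)) :
    ∀ r S, t < S.card + k → (Gop x Y q ^ k) ω r S = 0 := by
  induction k with
  | zero =>
    intro r S h
    have := Finset.card_le_univ S
    simp at this; omega
  | succ k ih =>
    intro r S h
    rw [pow_succ', Module.End.mul_apply, Gop, del_apply, Finset.sum_apply]
    refine Finset.sum_eq_zero fun a _ => ?_
    split_ifs with ha
    · simp
    · simp only [LinearMap.comp_apply, mp_apply, cc_apply]
      split_ifs with hS
      · simp
      · rw [par_apply]
        have := ih (X a * r) (insert (q a) S) (by rw [Finset.card_insert_of_notMem hS]; omega)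
        rw [Gop] at this
        rw [this]; simp

variable (x : Module.Basis (Fin n) K V) (L : Fin t → Submodule K V) (T : Finset (Fin t))
  (Y : Finset (Fin n))

/-- good elements of the cube -/
noncomputable def CX (m : ℤ) : Submodule K (Finset (Fin t) → ExteriorAlgebra K V) where
  carrier := {ξ | ∀ S, (¬ S ⊆ T → ξ S = 0) ∧ ξ S ∈ W x L (T \ S) (m - S.card) Y}
  add_mem' := by
    intro a b ha hb S
    refine ⟨fun h => ?_, Submodule.add_mem _ (ha S).2 (hb S).2⟩
    rw [Pi.add_apply, (ha S).1 h, (hb S).1 h, add_zero]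
  zero_mem' := fun S => ⟨fun _ => rfl, Submodule.zero_mem _⟩
  smul_mem' := by
    intro c a ha S
    refine ⟨fun h => ?_, Submodule.smul_mem _ _ (ha S).2⟩
    rw [Pi.smul_apply, (ha S).1 h, smul_zero]

lemma mem_CX {m : ℤ} {ξ : Finset (Fin t) → ExteriorAlgebra K V} :
    ξ ∈ CX x L T Y m ↔ ∀ S, (¬ S ⊆ T → ξ S = 0) ∧ ξ S ∈ W x L (T \ S) (m - S.card) Y := Iff.rfl

/-- good cube-valued forms -/
noncomputable def gd (m : ℤ) :
    Submodule K (MvPolynomial (Fin n) K →ₗ[K] (Finset (Fin t) → ExteriorAlgebra K V)) where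
  carrier := {ξ | (∀ r, ξ r ∈ CX x L T Y m) ∧ ∀ b ∈ Y, ∀ r, ξ (X b * r) = 0}
  add_mem' := by
    intro a b ha hb
    refine ⟨fun r => Submodule.add_mem _ (ha.1 r) (hb.1 r), fun c hc r => ?_⟩
    rw [LinearMap.add_apply, ha.2 c hc, hb.2 c hc, add_zero]
  zero_mem' := ⟨fun r => Submodule.zero_mem _, fun _ _ _ => rfl⟩
  smul_mem' := by
    intro c a ha
    refine ⟨fun r => Submodule.smul_mem _ _ (ha.1 r), fun b hb r => ?_⟩
    rw [LinearMap.smul_apply, ha.2 b hb, smul_zero]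

lemma mem_gd {m : ℤ} {ξ : MvPolynomial (Fin n) K →ₗ[K] (Finset (Fin t) → ExteriorAlgebra K V)} :
    ξ ∈ gd x L T Y m ↔ (∀ r, ξ r ∈ CX x L T Y m) ∧ ∀ b ∈ Y, ∀ r, ξ (X b * r) = 0 := Iff.rfl

variable {x L T Y}

lemma W_anti {T T' : Finset (Fin t)} (h : T' ⊆ T) {j : ℤ} : W x L T j Y ≤ W x L T' j Y := by
  intro a ha
  rw [mem_W] at ha ⊢
  exact ⟨fun i hi => ha.1 i (h hi), ha.2⟩

lemma dC_CX {m : ℤ} {ξ : Finset (Fin t) → ExteriorAlgebra K V} (h : ξ ∈ CX x L T Y m) :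
    dC K T ξ ∈ CX x L T Y (m + 1) := by
  rw [dC_apply]
  refine Submodule.sum_mem _ fun i hi => ?_
  rw [mem_CX]
  intro S
  rw [eps_apply]
  split_ifs with hS
  · refine ⟨fun hn => ?_, Submodule.smul_mem _ _ ?_⟩
    · rw [(h _).1, smul_zero]
      intro hh
      refine hn fun c hc => ?_
      by_cases e : c = i
      · rw [e]; exact hi
      · exact hh (Finset.mem_erase.2 ⟨e, hc⟩)
    · have h2 := (h (S.erase i)).2
      have e : m - ((S.erase i).card : ℤ) = m + 1 - S.card := by
        rw [← Finset.card_erase_add_one hS]; push_cast; ring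
      rw [e] at h2
      exact W_anti (Finset.sdiff_subset_sdiff le_rfl (Finset.erase_subset _ _)) h2
  · exact ⟨fun _ => rfl, Submodule.zero_mem _⟩

lemma par_CX {m : ℤ} {ξ : Finset (Fin t) → ExteriorAlgebra K V} (h : ξ ∈ CX x L T Y m) :
    par K ξ ∈ CX x L T Y m := by
  rw [mem_CX]
  intro S
  rw [par_apply]
  exact ⟨fun hn => by rw [(h S).1 hn, smul_zero], Submodule.smul_mem _ _ (h S).2⟩

lemma lm_W {T : Finset (Fin t)} {j : ℤ} {a : Fin n} (ha : a ∉ Y) {y : ExteriorAlgebra K V}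
    (h : y ∈ W x L T j Y) : ι K (x a) * y ∈ W x L T (j + 1) Y := by
  rw [mem_W] at h ⊢
  refine ⟨fun i hi => mul_U _ (h.1 i hi), mul_dg _ h.2.1, fun b hb => ?_⟩
  have hne : a ≠ b := fun e => ha (e ▸ hb)
  rw [ctr_ne x hne, h.2.2 b hb]; simp

lemma mp_CX {m : ℤ} {a : Fin n} (ha : a ∉ Y) {ξ : Finset (Fin t) → ExteriorAlgebra K V}
    (h : ξ ∈ CX x L T Y m) : mp t (lm (x a)) ξ ∈ CX x L T Y (m + 1) := by
  rw [mem_CX]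
  intro S
  rw [mp_apply]
  refine ⟨fun hn => by rw [(h S).1 hn, map_zero], ?_⟩
  have := lm_W ha (h S).2
  rw [lm_apply, show m + 1 - (S.card : ℤ) = m - S.card + 1 by ring]
  exact this

lemma mpcc_CX {m : ℤ} {a : Fin n} (ha : a ∉ Y) {i : Fin t} (hi : i ∈ T) (hl : x a ∈ L i)
    {ξ : Finset (Fin t) → ExteriorAlgebra K V}
    (h : ξ ∈ CX x L T Y m) : mp t (lm (x a)) (cc K i ξ) ∈ CX x L T Y m := by
  rw [mem_CX]
  intro S
  rw [mp_apply, cc_apply]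
  split_ifs with hS
  · simp
  · refine ⟨fun hn => ?_, ?_⟩
    · rw [(h _).1, smul_zero, map_zero]
      exact fun hh => hn ((Finset.subset_insert _ _).trans hh)
    · rw [map_smul, lm_apply]
      refine Submodule.smul_mem _ _ ?_
      have h1 := lm_W ha (h (insert i S)).2
      rw [Finset.card_insert_of_notMem hS] at h1
      push_cast at h1
      rw [show m - ((S.card : ℤ) + 1) + 1 = m - S.card by ring] at h1
      rw [mem_W] at h1 ⊢
      refine ⟨fun c hc => ?_, h1.2⟩
      by_cases e : c = i
      · subst e; exact mul_U' hl _
      · refine h1.1 c ?_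
        simp only [Finset.mem_sdiff, Finset.mem_insert, not_or] at hc ⊢
        exact ⟨hc.1, e, hc.2⟩

lemma E_gd {m : ℤ} {ξ : MvPolynomial (Fin n) K →ₗ[K] (Finset (Fin t) → ExteriorAlgebra K V)}
    (h : ξ ∈ gd x L T Y m) : Eop K V n T ξ ∈ gd x L T Y (m + 1) :=
  ⟨fun r => dC_CX (h.1 r), fun b hb r => by rw [Eop, post_apply, h.2 b hb, map_zero]⟩

lemma H_gd {m : ℤ} {ξ : MvPolynomial (Fin n) K →ₗ[K] (Finset (Fin t) → ExteriorAlgebra K V)}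
    (h : ξ ∈ gd x L T Y m) : Hop t x Y ξ ∈ gd x L T Y (m + 1) := by
  refine ⟨fun r => ?_, fun b hb r => ?_⟩
  · rw [Hop, del_apply]
    refine Submodule.sum_mem _ fun a _ => ?_
    split_ifs with ha
    · simp
    · exact par_CX (mp_CX ha (h.1 _))
  · rw [Hop, del_apply]
    refine Finset.sum_eq_zero fun a _ => ?_
    rw [mul_left_comm, h.2 b hb, map_zero]

lemma G_gd {q : Fin n → Fin t} (hq : ∀ a ∉ Y, q a ∈ T ∧ x a ∈ L (q a)) {m : ℤ}
    {ξ : MvPolynomial (Fin n) K →ₗ[K] (Finset (Fin t) → ExteriorAlgebra K V)}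
    (h : ξ ∈ gd x L T Y m) : Gop x Y q ξ ∈ gd x L T Y m := by
  refine ⟨fun r => ?_, fun b hb r => ?_⟩
  · rw [Gop, del_apply]
    refine Submodule.sum_mem _ fun a _ => ?_
    split_ifs with ha
    · simp
    · exact mpcc_CX ha (hq a ha).1 (hq a ha).2 (par_CX (h.1 _))
  · rw [Gop, del_apply]
    refine Finset.sum_eq_zero fun a _ => ?_
    rw [mul_left_comm, h.2 b hb, map_zero]

lemma Gpow_gd {q : Fin n → Fin t} (hq : ∀ a ∉ Y, q a ∈ T ∧ x a ∈ L (q a)) {m : ℤ}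
    {ξ : MvPolynomial (Fin n) K →ₗ[K] (Finset (Fin t) → ExteriorAlgebra K V)}
    (h : ξ ∈ gd x L T Y m) (k : ℕ) : (Gop x Y q ^ k) ξ ∈ gd x L T Y m := by
  induction k with
  | zero => simpa using h
  | succ k ih => rw [pow_succ', Module.End.mul_apply]; exact G_gd hq ih

lemma H_apply {ξ : MvPolynomial (Fin n) K →ₗ[K] (Finset (Fin t) → ExteriorAlgebra K V)}
    (h : ∀ b ∈ Y, ∀ r, ξ (X b * r) = 0) (r S) :
    Hop t x Y ξ r S = ((-1 : K) ^ S.card) • ∑ a, ι K (x a) * ξ (X a * r) S := by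
  rw [Hop, del_apply, Finset.sum_apply, Finset.smul_sum]
  refine Finset.sum_congr rfl fun a _ => ?_
  split_ifs with ha
  · rw [h a ha]; simp
  · simp only [LinearMap.comp_apply, par_apply, mp_apply, lm_apply]

lemma E_apply (ξ : MvPolynomial (Fin n) K →ₗ[K] (Finset (Fin t) → ExteriorAlgebra K V)) (r S) :
    Eop K V n T ξ r S = ∑ i ∈ T, if i ∈ S then sg K i S • ξ r (S.erase i) else 0 := by
  rw [Eop, post_apply, dC_apply, Finset.sum_apply]
  exact Finset.sum_congr rfl fun i _ => eps_apply _ _ _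

end main

section step

variable {K : Type*} [Field K] [CharZero K] {V : Type*} [AddCommGroup V] [Module K V] {n t : ℕ}
  {x : Module.Basis (Fin n) K V} {L : Fin t → Submodule K V} {T : Finset (Fin t)}
  {Y : Finset (Fin n)}

/-- the total differential -/
noncomputable def Dop (x : Module.Basis (Fin n) K V) (T : Finset (Fin t)) (Y : Finset (Fin n)) :
    Module.End K (MvPolynomial (Fin n) K →ₗ[K] (Finset (Fin t) → ExteriorAlgebra K V)) :=
  Eop K V n T + Hop t x Y

lemma Dop_def (ξ : MvPolynomial (Fin n) K →ₗ[K] (Finset (Fin t) → ExteriorAlgebra K V)) :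
    Dop x T Y ξ = Eop K V n T ξ + Hop t x Y ξ := rfl

lemma Dop_Dop (ξ : MvPolynomial (Fin n) K →ₗ[K] (Finset (Fin t) → ExteriorAlgebra K V)) :
    Dop x T Y (Dop x T Y ξ) = 0 := DD x Y T ξ

lemma Dop_apply {ξ : MvPolynomial (Fin n) K →ₗ[K] (Finset (Fin t) → ExteriorAlgebra K V)}
    (h : ∀ b ∈ Y, ∀ r, ξ (X b * r) = 0) (r S) :
    Dop x T Y ξ r S = (∑ i ∈ T, if i ∈ S then sg K i S • ξ r (S.erase i) else 0) +
      ((-1 : K) ^ S.card) • ∑ a, ι K (x a) * ξ (X a * r) S := by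
  rw [Dop_def, LinearMap.add_apply, Pi.add_apply, E_apply, H_apply h]

lemma Dop_gd {m : ℤ} {ξ : MvPolynomial (Fin n) K →ₗ[K] (Finset (Fin t) → ExteriorAlgebra K V)}
    (h : ξ ∈ gd x L T Y m) : Dop x T Y ξ ∈ gd x L T Y (m + 1) :=
  Submodule.add_mem _ (E_gd h) (H_gd h)

lemma Dop_gd' {m : ℤ} {ξ : MvPolynomial (Fin n) K →ₗ[K] (Finset (Fin t) → ExteriorAlgebra K V)}
    (h : ξ ∈ gd x L T Y (m - 1)) : Dop x T Y ξ ∈ gd x L T Y m := by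
  have := Dop_gd h
  rwa [sub_add_cancel] at this

lemma sgn_smul (k : ℕ) (a : ExteriorAlgebra K V) :
    ((-1 : K) ^ k) • ((-1 : K) ^ k) • a = a := by
  rw [smul_smul, ← mul_pow]; simp

lemma tot (hrow : ∀ T' ⊂ T, ∀ j : ℤ, (T'.card : ℤ) < j → Ex x L T' j Y) {m : ℤ}
    (hm : (T.card : ℤ) < m) (q : ℕ) :
    ∀ ξ ∈ gd x L T Y m, (∀ r, ξ r ∅ = 0) → (∀ r S, S.card + q ≤ T.card → ξ r S = 0) →
      Dop x T Y ξ = 0 → ∃ ζ ∈ gd x L T Y (m - 1), (∀ r, ζ r ∅ = 0) ∧ Dop x T Y ζ = ξ := by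
  induction q with
  | zero =>
    intro ξ hξ _ h0 _
    refine ⟨0, Submodule.zero_mem _, fun r => rfl, ?_⟩
    rw [map_zero]
    refine LinearMap.ext fun r => funext fun S => ?_
    by_cases hS : S ⊆ T
    · rw [h0 r S (by simpa using Finset.card_le_card hS)]; rfl
    · rw [(hξ.1 r S).1 hS]; rfl
  | succ q ih =>
    intro ξ hξ he h0 hD
    have key : ∀ S : Finset (Fin t), ∃ η : MvPolynomial (Fin n) K →ₗ[K] ExteriorAlgebra K V,
        (∀ r, η r ∈ W x L (T \ S) (m - 1 - S.card) Y) ∧ (∀ b ∈ Y, ∀ r, η (X b * r) = 0) ∧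
        (S.card + q ≤ T.card → ∀ r, ∑ a, ι K (x a) * η (X a * r) = ξ r S) ∧
        ((¬ S ⊆ T ∨ S = ∅ ∨ S.card + q ≠ T.card) → η = 0) := by
      intro S
      by_cases hS : ¬ S ⊆ T ∨ S = ∅ ∨ S.card + q ≠ T.card
      · refine ⟨0, fun r => Submodule.zero_mem _, fun _ _ _ => rfl, fun hc r => ?_, fun _ => rfl⟩
        simp only [LinearMap.zero_apply, mul_zero, Finset.sum_const_zero]
        rcases hS with hS | hS | hS
        · rw [(hξ.1 r S).1 hS]
        · rw [hS, he]
        · rw [h0 r S (by omega)]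
      · push Not at hS
        obtain ⟨h1, h2, h3⟩ := hS
        have hcard : (T \ S).card + S.card = T.card := Finset.card_sdiff_add_card_eq_card h1
        have hS0 := Finset.card_pos.2 h2
        obtain ⟨η, e1, e2, e3⟩ := hrow (T \ S) (Finset.sdiff_ssubset h1 h2) (m - S.card)
          (by push_cast [← hcard] at hm; omega)
          (LinearMap.proj S ∘ₗ ξ) (fun r => (hξ.1 r S).2)
          (fun b hb r => by simp [hξ.2 b hb]) (fun r => by
            have := congrFun (LinearMap.congr_fun hD r) S
            rw [Dop_apply hξ.2, Finset.sum_eq_zero, zero_add] at this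
            · have h5 := (smul_eq_zero.1 this).resolve_left (by simp)
              exact h5
            · intro i _
              split_ifs with hi
              · rw [h0, smul_zero]
                have := Finset.card_erase_add_one hi
                omega
              · rfl)
        refine ⟨η, fun r => ?_, e2, fun _ r => ?_, fun hh => ?_⟩
        · have := e1 r
          rwa [sub_right_comm] at this
        · exact e3 r
        · exfalso
          rcases hh with hh | hh | hh
          · exact hh h1
          · rw [hh] at h2; simp at h2
          · exact hh h3
    choose η η1 η2 η3 η4 using key
    set ζ : MvPolynomial (Fin n) K →ₗ[K] (Finset (Fin t) → ExteriorAlgebra K V) :=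
      LinearMap.pi fun S => ((-1 : K) ^ S.card) • η S with hζ
    have ζa : ∀ r S, ζ r S = ((-1 : K) ^ S.card) • η S r := fun r S => rfl
    have ζg : ζ ∈ gd x L T Y (m - 1) := by
      refine ⟨fun r S => ⟨fun hS => ?_, ?_⟩, fun b hb r => funext fun S => ?_⟩
      · rw [ζa, η4 S (Or.inl hS)]; simp
      · exact Submodule.smul_mem _ _ (η1 S r)
      · rw [ζa, η2 S b hb]; simp
    have ζe : ∀ r, ζ r ∅ = 0 := fun r => by rw [ζa, η4 ∅ (by simp)]; simp
    obtain ⟨ζ', g1, g2, g3⟩ := ih (ξ - Dop x T Y ζ) (Submodule.sub_mem _ hξ (Dop_gd' ζg))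
      (fun r => by
        rw [LinearMap.sub_apply, Pi.sub_apply, he, Dop_apply ζg.2]
        simp [ζe])
      (fun r S hS => by
        rw [LinearMap.sub_apply, Pi.sub_apply, Dop_apply ζg.2, Finset.sum_eq_zero, zero_add]
        · simp only [ζa, mul_smul_comm]
          rw [← Finset.smul_sum, sgn_smul, η3 S hS, sub_self]
        · intro i _
          split_ifs with hi
          · rw [ζa, η4, LinearMap.zero_apply, smul_zero, smul_zero]
            have := Finset.card_erase_add_one hi
            exact Or.inr (Or.inr (by omega))
          · rfl)
      (by rw [map_sub, hD, Dop_Dop, sub_zero])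
    refine ⟨ζ + ζ', Submodule.add_mem _ ζg g1, fun r => ?_, ?_⟩
    · rw [LinearMap.add_apply, Pi.add_apply, ζe, g2, add_zero]
    · rw [map_add, g3]; abel

lemma tot' (hrow : ∀ T' ⊂ T, ∀ j : ℤ, (T'.card : ℤ) < j → Ex x L T' j Y) {m : ℤ}
    (hm : (T.card : ℤ) < m) (ξ) (hξ : ξ ∈ gd x L T Y m) (he : ∀ r, ξ r ∅ = 0)
      (hD : Dop x T Y ξ = 0) :
      ∃ ζ ∈ gd x L T Y (m - 1), (∀ r, ζ r ∅ = 0) ∧ Dop x T Y ζ = ξ := by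
  refine tot hrow hm T.card ξ hξ he (fun r S hS => ?_) hD
  have : S = ∅ := by rw [← Finset.card_eq_zero]; omega
  rw [this, he]

lemma b0 (hT : T.Nonempty) (hrow : ∀ T' ⊂ T, ∀ j : ℤ, (T'.card : ℤ) < j → Ex x L T' j Y)
    {q : Fin n → Fin t} (hq : ∀ a ∉ Y, q a ∈ T ∧ x a ∈ L (q a)) {m : ℤ}
    (hm : (T.card : ℤ) < m) (z) (hz : z ∈ CX x L T Y m) (hd : dC K T z = 0) :
    ∃ u ∈ CX x L T Y (m - 1), dC K T u = z := by
  have hz0 : z ∅ = 0 := by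
    obtain ⟨i, hi⟩ := hT
    have := congrFun hd {i}
    rw [dC_apply, Finset.sum_apply, Finset.sum_eq_single i] at this
    · rw [eps_apply] at this
      simp only [Finset.mem_singleton, if_true, Finset.erase_singleton, Pi.zero_apply] at this
      refine (smul_eq_zero.1 this).resolve_left ?_
      intro h
      have := sg_sq (K := K) i {i}
      rw [h] at this; simp at this
    · intro j _ hj; rw [eps_apply]; simp [hj]
    · intro h; exact absurd hi h
  set ξ : MvPolynomial (Fin n) K →ₗ[K] (Finset (Fin t) → ExteriorAlgebra K V) :=
    ((aeval (fun _ : Fin n => (0 : K))).toLinearMap).smulRight z with hξ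
  have ξa : ∀ r, ξ r = aeval (fun _ : Fin n => (0 : K)) r • z := fun r => rfl
  have ξX : ∀ b r, ξ (X b * r) = 0 := fun b r => by rw [ξa, map_mul, aeval_X]; simp
  have ξ1 : ξ 1 = z := by rw [ξa]; simp
  have ξg : ξ ∈ gd x L T Y m := ⟨fun r => by rw [ξa]; exact Submodule.smul_mem _ _ hz,
    fun b _ r => ξX b r⟩
  have Gξ : Gop x Y q ξ = 0 := by
    refine LinearMap.ext fun r => ?_
    rw [Gop, del_apply]
    simp [ξX]
  have Hξ : Hop t x Y ξ = 0 := by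
    refine LinearMap.ext fun r => ?_
    rw [Hop, del_apply]
    simp [ξX]
  have Eξ : Eop K V n T ξ = 0 := by
    refine LinearMap.ext fun r => ?_
    rw [Eop, post_apply, ξa, map_smul, hd]; simp
  obtain ⟨ζ, h1, -, h3⟩ := tot' hrow hm ξ ξg (fun r => by rw [ξa, Pi.smul_apply, hz0, smul_zero])
    (by rw [Dop_def, Eξ, Hξ, add_zero])
  have ei := exp_identity (K := K) (Eop K V n T) (Gop x Y q) (Hop t x Y)
    (EG x Y q T fun a ha => (hq a ha).1) (GH x Y q) (t + 1)
  have ei2 := LinearMap.congr_fun ei ζ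
  set u := (∑ k ∈ Finset.range (t + 1 + 1), ((k.factorial : K)⁻¹) • Gop x Y q ^ k) ζ with hu
  have hug : u ∈ gd x L T Y (m - 1) := by
    rw [hu, LinearMap.sum_apply]
    refine Submodule.sum_mem _ fun k _ => ?_
    rw [LinearMap.smul_apply]
    exact Submodule.smul_mem _ _ (Gpow_gd hq h1 k)
  refine ⟨u 1, hug.1 1, ?_⟩
  rw [LinearMap.add_apply, Module.End.mul_apply, ← hu, LinearMap.sum_apply,
    LinearMap.smul_apply, Module.End.mul_apply] at ei2
  have hn : (Gop x Y q ^ (t + 1)) (Hop t x Y ζ) = 0 := by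
    refine LinearMap.ext fun r => funext fun S => ?_
    rw [G_nil x Y q (t + 1) _ r S (by omega)]; rfl
  rw [hn, smul_zero, add_zero, Finset.sum_eq_single 0] at ei2
  · have := LinearMap.congr_fun ei2 1
    rw [LinearMap.smul_apply, pow_zero, one_mul, ← Dop, h3] at this
    rw [Eop, post_apply] at this
    rw [← this]; simp [ξ1]
  · intro k _ hk
    obtain ⟨k, rfl⟩ := Nat.exists_eq_succ_of_ne_zero hk
    rw [LinearMap.smul_apply, Module.End.mul_apply, ← Dop, h3, Nat.succ_eq_add_one, pow_succ,
      Module.End.mul_apply, Gξ, map_zero, smul_zero]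
  · intro h; simp at h

lemma bb (hT : T.Nonempty) (hrow : ∀ T' ⊂ T, ∀ j : ℤ, (T'.card : ℤ) < j → Ex x L T' j Y)
    {q : Fin n → Fin t} (hq : ∀ a ∉ Y, q a ∈ T ∧ x a ∈ L (q a)) {m : ℤ}
    (hm : (T.card : ℤ) < m) (ξ) (hξ : ξ ∈ gd x L T Y m) (hE : Eop K V n T ξ = 0) :
    ∃ u ∈ gd x L T Y (m - 1), Eop K V n T u = ξ := by
  obtain ⟨s, hs⟩ := exists_lift (dC K T) (CX x L T Y (m - 1))
    (CX x L T Y m ⊓ LinearMap.ker (dC K T)) (fun z hz => b0 hT hrow hq hm z hz.1 hz.2)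
  have hr : ∀ r, ξ r ∈ CX x L T Y m ⊓ LinearMap.ker (dC K T) := fun r =>
    ⟨hξ.1 r, LinearMap.congr_fun hE r⟩
  refine ⟨s ∘ₗ ξ, ⟨fun r => (hs _ (hr r)).1, fun b hb r => ?_⟩, ?_⟩
  · rw [LinearMap.comp_apply, hξ.2 b hb, map_zero]
  · exact LinearMap.ext fun r => (hs _ (hr r)).2

/-- restriction to a layer -/
noncomputable def rs (K : Type*) [Field K] (V : Type*) [AddCommGroup V] [Module K V] {t : ℕ}
    (c k : ℕ) : (Finset (Fin t) → ExteriorAlgebra K V) →ₗ[K] (Finset (Fin t) → ExteriorAlgebra K V) :=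
  LinearMap.pi fun S => if S.card + c = k then LinearMap.proj S else 0

lemma rs_apply (c k : ℕ) (v : Finset (Fin t) → ExteriorAlgebra K V) (S) :
    rs K V c k v S = if S.card + c = k then v S else 0 := by
  rw [rs, LinearMap.pi_apply]; split_ifs <;> rfl

lemma rs_dC (c k : ℕ) (v : Finset (Fin t) → ExteriorAlgebra K V) :
    dC K T (rs K V (c + 1) k v) = rs K V c k (dC K T v) := by
  funext S
  rw [rs_apply, dC_apply, dC_apply, Finset.sum_apply, Finset.sum_apply]
  have : (if S.card + c = k then ∑ i ∈ T, eps K i v S else 0) =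
      ∑ i ∈ T, if S.card + c = k then eps K i v S else 0 := by
    split_ifs <;> simp
  rw [this]
  refine Finset.sum_congr rfl fun i _ => ?_
  rw [eps_apply, eps_apply, rs_apply]
  by_cases hi : i ∈ S
  · have h1 := Finset.card_erase_add_one hi
    by_cases hk : S.card + c = k
    · have hk2 : (S.erase i).card + (c + 1) = k := by omega
      simp only [hi, hk, hk2, if_true]
    · have hk2 : ¬ (S.erase i).card + (c + 1) = k := by omega
      simp only [hi, hk, hk2, if_true, if_false, smul_zero]
  · simp [hi]

lemma rs_gd {m : ℤ} (c k : ℕ) {ξ} (h : ξ ∈ gd x L T Y m) : rs K V c k ∘ₗ ξ ∈ gd x L T Y m := by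
  refine ⟨fun r S => ?_, fun b hb r => by rw [LinearMap.comp_apply, h.2 b hb, map_zero]⟩
  rw [LinearMap.comp_apply, rs_apply]
  split_ifs
  · exact h.1 r S
  · exact ⟨fun _ => rfl, Submodule.zero_mem _⟩

lemma down (hT : T.Nonempty) (hrow : ∀ T' ⊂ T, ∀ j : ℤ, (T'.card : ℤ) < j → Ex x L T' j Y)
    {q : Fin n → Fin t} (hq : ∀ a ∉ Y, q a ∈ T ∧ x a ∈ L (q a)) {m : ℤ}
    (hm : (T.card : ℤ) < m) (k : ℕ) : ∀ ξ ∈ gd x L T Y m, Dop x T Y ξ = 0 →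
    (∀ r S, k ≤ S.card → ξ r S = 0) → ∃ ζ ∈ gd x L T Y (m - 1), Dop x T Y ζ = ξ := by
  induction k with
  | zero =>
    intro ξ _ _ h
    refine ⟨0, Submodule.zero_mem _, ?_⟩
    rw [map_zero]
    refine LinearMap.ext fun r => funext fun S => ?_
    rw [h r S (Nat.zero_le _)]; rfl
  | succ k ih =>
    intro ξ hξ hD h
    have hE : Eop K V n T (rs K V 1 (k + 1) ∘ₗ ξ) = 0 := by
      refine LinearMap.ext fun r => ?_
      rw [Eop, post_apply, LinearMap.comp_apply, rs_dC]
      funext S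
      rw [rs_apply]
      split_ifs with hS
      · have := congrFun (LinearMap.congr_fun hD r) S
        rw [Dop_def, LinearMap.add_apply, Pi.add_apply, H_apply hξ.2, Finset.sum_eq_zero,
          smul_zero, add_zero] at this
        · exact this
        · intro a _; rw [h _ _ (by omega), mul_zero]
      · rfl
    obtain ⟨u, hu, hEu⟩ := bb hT hrow hq hm _ (rs_gd 1 (k + 1) hξ) hE
    have hu' := rs_gd 1 k hu
    obtain ⟨ζ, h1, h2⟩ := ih (ξ - Dop x T Y (rs K V 1 k ∘ₗ u))
      (Submodule.sub_mem _ hξ (Dop_gd' hu')) (by rw [map_sub, hD, Dop_Dop, sub_zero])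
      (fun r S hS => by
        rw [LinearMap.sub_apply, Pi.sub_apply, Dop_def, LinearMap.add_apply, Pi.add_apply,
          H_apply hu'.2, Finset.sum_eq_zero, smul_zero, add_zero]
        · rw [Eop, post_apply, LinearMap.comp_apply, rs_dC, rs_apply]
          split_ifs with hk
          · have := congrFun (LinearMap.congr_fun hEu r) S
            rw [Eop, post_apply, LinearMap.comp_apply, rs_apply, if_pos (by omega)] at this
            rw [this, sub_self]
          · rw [h r S (by omega), sub_zero]
        · intro a _
          rw [LinearMap.comp_apply, rs_apply, if_neg (by omega), mul_zero])
    exact ⟨ζ + rs K V 1 k ∘ₗ u, Submodule.add_mem _ h1 hu', by rw [map_add, h2]; abel⟩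

lemma Ex_step (hT : T.Nonempty) (hrow : ∀ T' ⊂ T, ∀ j : ℤ, (T'.card : ℤ) < j → Ex x L T' j Y)
    {q : Fin n → Fin t} (hq : ∀ a ∉ Y, q a ∈ T ∧ x a ∈ L (q a)) {m : ℤ}
    (hm : (T.card : ℤ) < m) : Ex x L T m Y := by
  intro ω hω hY hd
  set Ξ : MvPolynomial (Fin n) K →ₗ[K] (Finset (Fin t) → ExteriorAlgebra K V) :=
    LinearMap.pi fun S => if S = ∅ then ω else 0 with hΞ
  have Ξe : ∀ r, Ξ r ∅ = ω r := fun r => by simp [hΞ]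
  have Ξn : ∀ r S, S ≠ ∅ → Ξ r S = 0 := fun r S hS => by simp [hΞ, hS]
  have Ξg : Ξ ∈ gd x L T Y m := by
    refine ⟨fun r S => ?_, fun b hb r => funext fun S => ?_⟩
    · by_cases hS : S = ∅
      · subst hS
        refine ⟨fun h => absurd (Finset.empty_subset _) h, ?_⟩
        rw [Ξe]; simpa using hω r
      · rw [Ξn r S hS]
        exact ⟨fun _ => rfl, Submodule.zero_mem _⟩
    · by_cases hS : S = ∅
      · subst hS; rw [Ξe, hY b hb]; rfl
      · rw [Ξn _ S hS]; rfl
  have HΞ : Hop t x Y Ξ = 0 := by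
    refine LinearMap.ext fun r => funext fun S => ?_
    rw [H_apply Ξg.2]
    by_cases hS : S = ∅
    · subst hS; simp only [Ξe, hd]; simp
    · rw [Finset.sum_eq_zero fun a _ => by rw [Ξn _ S hS, mul_zero]]; simp
  have DΞ : Dop x T Y Ξ = Eop K V n T Ξ := by rw [Dop_def, HΞ, add_zero]
  obtain ⟨ζ, h1, h2, h3⟩ := tot' hrow (m := m + 1) (by omega) (Dop x T Y Ξ) (Dop_gd Ξg)
    (fun r => by rw [DΞ, E_apply]; simp) (Dop_Dop _)
  rw [add_sub_cancel_right] at h1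
  obtain ⟨ζ', g1, g2⟩ := down hT hrow hq hm (t + 1) (Ξ - ζ) (Submodule.sub_mem _ Ξg h1)
    (by rw [map_sub, h3, sub_self]) (fun r S hS => by
      have := Finset.card_le_univ S
      simp at this; omega)
  refine ⟨LinearMap.proj ∅ ∘ₗ ζ', fun r => ?_, fun b hb r => ?_, fun r => ?_⟩
  · have := (g1.1 r ∅).2
    simpa using this
  · rw [LinearMap.comp_apply, g1.2 b hb]; rfl
  · have := congrFun (LinearMap.congr_fun g2 r) ∅
    rw [Dop_apply g1.2, LinearMap.sub_apply, Pi.sub_apply, Ξe, h2, sub_zero] at this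
    simpa using this

end step

section final

variable {K : Type*} [Field K] {V : Type*} [AddCommGroup V] [Module K V] {n t : ℕ}

lemma adapted (x : Module.Basis (Fin n) K V) (L : Fin t → Submodule K V) {T : Finset (Fin t)}
    (hT : T.Nonempty) : ∃ (x' : Module.Basis (Fin n) K V) (Y : Finset (Fin n)) (q : Fin n → Fin t),
      (∀ a ∉ Y, q a ∈ T ∧ x' a ∈ L (q a)) ∧
      ∀ b ∈ Y, ∀ i ∈ T, ∀ l ∈ L i, x'.coord b l = 0 := by
  classical
  obtain ⟨b, hb, hsp, hli⟩ := exists_linearIndependent K (⋃ i ∈ T, (L i : Set V))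
  have hli' : LinearIndepOn K id b := hli
  let B := Module.Basis.extend hli'
  have hB : ∀ c, B c = (c : V) := fun c => by simp [B]
  let e := B.indexEquiv x
  let x' := B.reindex e
  have hx' : ∀ a, x' a = (e.symm a : V) := fun a => by simp [x', hB]
  have hq : ∀ a : Fin n, ∃ i, x' a ∈ b → i ∈ T ∧ x' a ∈ L i := by
    intro a
    by_cases h : x' a ∈ b
    · have := hb h
      simp only [Set.mem_iUnion] at this
      obtain ⟨i, hi, hl⟩ := this
      exact ⟨i, fun _ => ⟨hi, hl⟩⟩
    · exact ⟨hT.choose, fun h' => absurd h' h⟩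
  choose q hq using hq
  refine ⟨x', Finset.univ.filter fun a => x' a ∉ b, q, fun a ha => ?_, fun c hc i hi l hl => ?_⟩
  · exact hq a (by simpa using ha)
  · have hc' : x' c ∉ b := by simpa using hc
    have h1 : l ∈ Submodule.span K b := by
      rw [hsp]
      refine Submodule.subset_span ?_
      simp only [Set.mem_iUnion]
      exact ⟨i, hi, hl⟩
    have h2 : Submodule.span K b ≤ LinearMap.ker (x'.coord c) := by
      rw [Submodule.span_le]
      intro v hv
      have hv' : v ∈ hli'.extend (Set.subset_univ b) := hli'.subset_extend _ hv
      have e1 : x' (e ⟨v, hv'⟩) = v := by rw [hx']; simp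
      have hne : e ⟨v, hv'⟩ ≠ c := by
        intro h
        rw [h] at e1
        rw [e1] at hc'
        exact hc' hv
      show x'.coord c v = 0
      rw [← e1]
      simp [Finsupp.single_apply, hne]
    exact h2 h1

lemma Ex_all [CharZero K] (L : Fin t → Submodule K V) (T : Finset (Fin t)) :
    ∀ (x : Module.Basis (Fin n) K V) (j : ℤ), (T.card : ℤ) < j → Ex x L T j ∅ := by
  induction T using Finset.strongInduction with
  | H T ih =>
    intro x j hj
    rcases T.eq_empty_or_nonempty with rfl | hT
    · exact Ex_empty x L (by simpa using hj)
    · obtain ⟨x', Y, q, hq, hY⟩ := adapted x L hT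
      refine Ex_change x x' L T j ((Ex_iff hY).2 ?_)
      refine Ex_step hT (fun T' hT' j' hj' => ?_) hq hj
      exact (Ex_iff fun b hb i hi => hY b hb i (hT'.1 hi)).1 (ih T' hT' x' j' hj')

lemma gen [CharZero K] (x : Module.Basis (Fin n) K V) (L : Fin t → Submodule K V) (j : ℕ)
    (hj : t < j + 1)
    (a : ExteriorAlgebra K V) (ha : a ∈ ⋀[K]^(j + 1) V) (hU : ∀ i, a ∈ U (L i)) :
    ∃ η : Fin n → ExteriorAlgebra K V, (∀ c, η c ∈ ⋀[K]^j V ∧ ∀ i, η c ∈ U (L i)) ∧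
      a = ∑ c, ι K (x c) * η c := by
  have haW : a ∈ W x L Finset.univ ((j + 1 : ℕ) : ℤ) ∅ := by
    rw [mem_W, dg_nat]
    exact ⟨fun i _ => hU i, ha, by simp⟩
  obtain ⟨η, h1, -, h3⟩ := Ex_all L Finset.univ x ((j + 1 : ℕ) : ℤ)
    (by rw [Finset.card_univ, Fintype.card_fin]; exact_mod_cast hj)
    (((aeval (fun _ : Fin n => (0 : K))).toLinearMap).smulRight a)
    (fun r => Submodule.smul_mem _ _ haW) (by simp) (fun r => by simp)
  refine ⟨fun c => η (X c), fun c => ?_, ?_⟩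
  · have := h1 (X c)
    rw [mem_W, show ((j + 1 : ℕ) : ℤ) - 1 = (j : ℕ) by push_cast; ring, dg_nat] at this
    exact ⟨this.2.1, fun i => this.1 i (Finset.mem_univ _)⟩
  · have := h3 1
    simp only [mul_one] at this
    rw [this]; simp

lemma hom_mem [CharZero K] (x : Module.Basis (Fin n) K V) (L : Fin t → Submodule K V)
    (I : TwoSidedIdeal (ExteriorAlgebra K V))
    (hI : ∀ d ≤ t, ∀ a ∈ ⋀[K]^d V, (∀ i, a ∈ U (L i)) → a ∈ I) (j : ℕ) :
    ∀ a ∈ ⋀[K]^j V, (∀ i, a ∈ U (L i)) → a ∈ I := by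
  induction j with
  | zero => exact hI 0 (Nat.zero_le _)
  | succ j ih =>
    intro a ha hU
    rcases le_or_gt (j + 1) t with h | h
    · exact hI _ h a ha hU
    · obtain ⟨η, h1, h2⟩ := gen x L j h a ha hU
      rw [h2]
      exact sum_mem fun c _ => I.mul_mem_left _ _ (ih _ (h1 c).1 (h1 c).2)

end final

end SubArr

theorem exterior_intersection_ideal_generated_in_degree_card
    (K : Type*) [Field K] [CharZero K]
    (V : Type*) [AddCommGroup V] [Module K V] [FiniteDimensional K V]
    (t : ℕ) (L : Fin t → Submodule K V)
    (J : Fin t → TwoSidedIdeal (ExteriorAlgebra K V))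
    (hJ : ∀ i, J i = TwoSidedIdeal.span (ExteriorAlgebra.ι K '' (L i : Set V))) :
    TwoSidedIdeal.span
        {x : ExteriorAlgebra K V | x ∈ (⨅ i, J i) ∧
          x ∈ (⨆ d ∈ Set.Iic t, ⋀[K]^d V : Submodule K (ExteriorAlgebra K V))}
      = ⨅ i, J i := by
  classical
  have hmem : ∀ a, a ∈ (⨅ i, J i) ↔ ∀ i, a ∈ SubArr.U (L i) := by
    intro a
    rw [TwoSidedIdeal.mem_iInf]
    refine forall_congr' fun i => ?_
    rw [hJ, SubArr.mem_span_iff_U]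
  refine le_antisymm (TwoSidedIdeal.span_le.2 fun a ha => ha.1) ?_
  intro a ha
  have hU := (hmem a).1 ha
  rw [← DirectSum.sum_support_decompose (fun i : ℕ => ⋀[K]^i V) a]
  refine sum_mem fun j _ => ?_
  refine SubArr.hom_mem (Module.finBasis K V) L _ (fun d hd b hb hbU => ?_) j _
    (SetLike.coe_mem _) (fun i => SubArr.proj_U (hU i) j)
  refine TwoSidedIdeal.subset_span ⟨(hmem b).2 hbU, ?_⟩
  exact Submodule.mem_iSup_of_mem d (Submodule.mem_iSup_of_mem hd hb)
end

section
/- Let K be a field and A = ⊕_{d ≥ 0} A_d an ℕ-graded (possibly noncommutative) associative unital K-algebra with A_0 = K·1, and let A_+ = ⊕_{d > 0} A_d. Let G be a finite group acting on A by degree-preserving K-algebra automorphisms, with |G| invertible in K, and let R : A → A denote the Reynolds operator R(f) = |G|^{-1} Σ_{g ∈ G} g·f. Let I_G = A·A_+^G be the left ideal of A generated by the G-invariant elements of positive degree. Suppose f_1, …, f_r are homogeneous elements of positive degree that generate I_G as a left ideal. Then the fixed subalgebra A^G is generated as a K-algebra by R(f_1), …, R(f_r). (Hilbert invariant theorem for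 graded algebras.) -/
open DirectSum in
lemma hilb_dec_comm {K A : Type*} [Field K] [Ring A] [Algebra K A]
    (𝒜 : ℕ → Submodule K A) [GradedAlgebra 𝒜] (φ : A ≃ₐ[K] A)
    (h : ∀ d, ∀ a ∈ 𝒜 d, φ a ∈ 𝒜 d) (a : A) (n : ℕ) :
    (decompose 𝒜 (φ a) n : A) = φ (decompose 𝒜 a n) := by
  induction a using DirectSum.Decomposition.inductionOn 𝒜 with
  | zero => simp
  | @homogeneous i m =>
    by_cases hn : i = n
    · subst hn
      rw [decompose_of_mem_same 𝒜 (h i m m.2), decompose_of_mem_same 𝒜 m.2]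
    · rw [decompose_of_mem_ne 𝒜 (h i m m.2) hn, decompose_of_mem_ne 𝒜 m.2 hn, map_zero]
  | add a b ha hb => simp [decompose_add, ha, hb]

open DirectSum in
lemma hilb_comp {K A : Type*} [Field K] [Ring A] [Algebra K A]
    (𝒜 : ℕ → Submodule K A) [GradedAlgebra 𝒜] {r : ℕ} (f : Fin r → A) (e : Fin r → ℕ)
    (hf : ∀ i, f i ∈ 𝒜 (e i)) (b : Fin r → A) (d : ℕ) (x : A) (hx : x ∈ 𝒜 d)
    (h : x = ∑ j, b j * f j) :
    x = ∑ j, if e j ≤ d then (decompose 𝒜 (b j) (d - e j) : A) * f j else 0 := by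
  have h1 : (decompose 𝒜 x d : A) = x := decompose_of_mem_same 𝒜 hx
  rw [← h1]
  conv_lhs => rw [h]
  rw [decompose_sum, DFinsupp.finset_sum_apply, AddSubmonoidClass.coe_finset_sum]
  refine Finset.sum_congr rfl fun j _ => ?_
  rw [coe_decompose_mul_of_right_mem 𝒜 d (hf j)]

/-- **Hilbert invariant theorem for graded algebras.**
Let `A = ⊕ A_d` be an ℕ-graded `K`-algebra with `A_0 = K·1`, and let a finite
group `G` with `|G|` invertible in `K` act on `A` by degree-preserving algebra
automorphisms.  If homogeneous elements `f_1, …, f_r` of positive degree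
generate the Hilbert left ideal `I_G = A·A_+^G`, then the fixed subalgebra
`A^G` is generated as a `K`-algebra by `R(f_1), …, R(f_r)`, where `R` is the
Reynolds operator. -/
theorem hilbert_invariant_theorem_graded
    (K : Type*) [Field K] (A : Type*) [Ring A] [Algebra K A]
    (𝒜 : ℕ → Submodule K A) [GradedAlgebra 𝒜]
    (h0 : 𝒜 0 = (1 : Submodule K A))
    (G : Type*) [Group G] [Fintype G]
    (ρ : G →* (A ≃ₐ[K] A))
    (hdeg : ∀ (g : G) (d : ℕ), ∀ a ∈ 𝒜 d, ρ g a ∈ 𝒜 d)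
    (hinv : (Fintype.card G : K) ≠ 0)
    (r : ℕ) (f : Fin r → A)
    (hf : ∀ i, ∃ d > 0, f i ∈ 𝒜 d)
    (hgen : Ideal.span (Set.range f)
      = Ideal.span {a : A | (∀ g : G, ρ g a = a) ∧
          a ∈ (⨆ d ∈ Set.Ioi (0 : ℕ), 𝒜 d : Submodule K A)}) :
    ∀ x : A,
      x ∈ Algebra.adjoin K
          (Set.range fun i => (Fintype.card G : K)⁻¹ • ∑ g : G, ρ g (f i))
        ↔ ∀ g : G, ρ g x = x := by
  classical
  choose e he hfe using hf
  set I := Ideal.span (Set.range f) with hI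
  set R : A → A := fun x => (Fintype.card G : K)⁻¹ • ∑ g : G, ρ g x with hR
  have hRinv : ∀ x g, ρ g (R x) = R x := by
    intro x g
    simp only [hR, map_smul, map_sum]
    congr 1
    have : ∀ h, ρ g (ρ h x) = ρ (g * h) x := fun h => by rw [map_mul]; rfl
    simp only [this]
    exact Fintype.sum_equiv (Equiv.mulLeft g) _ _ (fun h => rfl)
  have hRfix : ∀ x, (∀ g, ρ g x = x) → R x = x := by
    intro x hx
    simp only [hR, hx, Finset.sum_const, Finset.card_univ]
    rw [← Nat.cast_smul_eq_nsmul K, smul_smul, inv_mul_cancel₀ hinv, one_smul]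
  have hRdeg : ∀ d, ∀ x ∈ 𝒜 d, R x ∈ 𝒜 d := fun d x hx =>
    Submodule.smul_mem _ _ (Submodule.sum_mem _ fun g _ => hdeg g d x hx)
  have hRmul : ∀ x y, (∀ g, ρ g y = y) → R (x * y) = R x * y := by
    intro x y hy
    simp only [hR, map_mul, hy, smul_mul_assoc, Finset.sum_mul]
  have hRsum : ∀ c : Fin r → A, R (∑ j, c j) = ∑ j, R (c j) := by
    intro c
    simp only [hR, map_sum]
    rw [Finset.sum_comm, Finset.smul_sum]
  have hspan : ∀ (F : Fin r → A) x, x ∈ Ideal.span (Set.range F) → ∃ b : Fin r → A,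
      x = ∑ j, b j * F j := by
    intro F x hx
    obtain ⟨b, hb⟩ := (Submodule.mem_span_range_iff_exists_fun A).1 hx
    exact ⟨b, hb.symm⟩
  let π : A →+* A := GradedRing.projZeroRingHom 𝒜
  have hπ : ∀ a, π a = (DirectSum.decompose 𝒜 a 0 : A) := fun a => rfl
  have hπρ : ∀ g a, π (ρ g a - a) = 0 := by
    intro g a
    rw [map_sub, hπ, hπ, hilb_dec_comm 𝒜 (ρ g) (hdeg g)]
    have : (DirectSum.decompose 𝒜 a 0 : A) ∈ (1 : Submodule K A) := h0 ▸ SetLike.coe_mem _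
    obtain ⟨k, hk⟩ := Submodule.mem_one.1 this
    rw [← hk, AlgEquiv.commutes, sub_self]
  let N : Submodule A A :=
    { carrier := {y | ∃ b : Fin r → A, (∀ j, π (b j) = 0) ∧ y = ∑ j, b j * f j}
      zero_mem' := ⟨0, by simp, by simp⟩
      add_mem' := by
        rintro _ _ ⟨b, hb, rfl⟩ ⟨c, hc, rfl⟩
        exact ⟨b + c, fun j => by simp [hb, hc], by simp [add_mul, Finset.sum_add_distrib]⟩
      smul_mem' := by
        rintro a _ ⟨b, hb, rfl⟩
        exact ⟨fun j => a * b j, fun j => by simp [hb], by simp [Finset.mul_sum, mul_assoc]⟩ }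
  have hNI : ∀ y ∈ N, y ∈ I := by
    rintro _ ⟨b, -, rfl⟩
    exact Ideal.sum_mem _ fun j _ => Ideal.mul_mem_left _ _ (Ideal.subset_span ⟨j, rfl⟩)
  have hmulN : ∀ a y, π a = 0 → y ∈ I → a * y ∈ N := by
    intro a y ha hy
    obtain ⟨c, rfl⟩ := hspan f y hy
    exact ⟨fun j => a * c j, fun j => by simp [ha], by simp [Finset.mul_sum, mul_assoc]⟩
  have hact : ∀ g, ∀ x ∈ I, ρ g x - x ∈ N := by
    intro g x hx
    rw [hgen] at hx
    induction hx using Submodule.span_induction with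
    | mem x h => rw [h.1 g, sub_self]; exact N.zero_mem
    | zero => simp
    | add x y _ _ h1 h2 =>
      have : ρ g (x + y) - (x + y) = (ρ g x - x) + (ρ g y - y) := by rw [map_add]; abel
      rw [this]; exact N.add_mem h1 h2
    | smul a x hx h =>
      have hxI : x ∈ I := by rw [hgen]; exact hx
      have hgx : ρ g x ∈ I := by
        have := I.add_mem (hNI _ h) hxI
        simpa using this
      have : ρ g (a • x) - a • x = (ρ g a - a) * ρ g x + a • (ρ g x - x) := by
        simp only [smul_eq_mul, map_mul]; noncomm_ring
      rw [this]
      exact N.add_mem (hmulN _ _ (hπρ g a) hgx) (N.smul_mem a h)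
  have hRN : ∀ x ∈ I, x - R x ∈ N := by
    intro x hx
    have h1 : ∑ g : G, (ρ g x - x) ∈ N := N.sum_mem fun g _ => hact g x hx
    have h2 : x - R x = algebraMap K A (-(Fintype.card G : K)⁻¹) • ∑ g : G, (ρ g x - x) := by
      rw [smul_eq_mul, ← Algebra.smul_def, Finset.sum_sub_distrib, Finset.sum_const,
        Finset.card_univ, ← Nat.cast_smul_eq_nsmul K, smul_sub, smul_smul, neg_mul,
        inv_mul_cancel₀ hinv]
      simp only [hR, neg_smul, one_smul]
      abel
    rw [h2]; exact N.smul_mem _ h1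
  have hfJ : ∀ n, ∀ i, e i = n → f i ∈ Ideal.span (Set.range fun i => R (f i)) := by
    intro n
    induction n using Nat.strong_induction_on with
    | _ n ih =>
      intro i hi
      obtain ⟨b, hb, hbe⟩ := hRN (f i) (Ideal.subset_span ⟨i, rfl⟩)
      have h3 := hilb_comp 𝒜 f e hfe b (e i) _
        (Submodule.sub_mem _ (hfe i) (hRdeg _ _ (hfe i))) hbe
      rw [sub_eq_iff_eq_add] at h3
      rw [h3]
      refine Ideal.add_mem _ (Ideal.sum_mem _ fun j _ => ?_) (Ideal.subset_span ⟨i, rfl⟩)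
      split_ifs with hle
      · rcases hle.lt_or_eq with hlt | heq
        · exact Ideal.mul_mem_left _ _ (ih (e j) (hi ▸ hlt) j rfl)
        · have : (DirectSum.decompose 𝒜 (b j) (e i - e j) : A) = 0 := by
            rw [heq, Nat.sub_self]; exact hb j
          rw [this, zero_mul]; exact Ideal.zero_mem _
      · exact Ideal.zero_mem _
  have hIJ : I ≤ Ideal.span (Set.range fun i => R (f i)) := by
    rw [hI, Ideal.span_le]
    rintro _ ⟨i, rfl⟩
    exact hfJ _ i rfl
  have hhom : ∀ d, ∀ x ∈ 𝒜 d, (∀ g, ρ g x = x) →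
      x ∈ Algebra.adjoin K (Set.range fun i => R (f i)) := by
    intro d
    induction d using Nat.strong_induction_on with
    | _ d ih =>
      intro x hx hxg
      rcases Nat.eq_zero_or_pos d with rfl | hd
      · rw [h0] at hx
        obtain ⟨k, rfl⟩ := Submodule.mem_one.1 hx
        exact Subalgebra.algebraMap_mem _ k
      · have hxI : x ∈ I := by
          rw [hgen]
          exact Ideal.subset_span ⟨hxg, Submodule.mem_iSup_of_mem d
            (Submodule.mem_iSup_of_mem (Set.mem_Ioi.2 hd) hx)⟩
        obtain ⟨b, hb⟩ := hspan _ x (hIJ hxI)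
        have h3 := hilb_comp 𝒜 (fun i => R (f i)) e (fun i => hRdeg _ _ (hfe i)) b d x hx hb
        rw [← hRfix x hxg, h3, hRsum]
        refine Subalgebra.sum_mem _ fun j _ => ?_
        split_ifs with hle
        · rw [hRmul _ _ (hRinv (f j))]
          refine Subalgebra.mul_mem _ (ih (d - e j) (Nat.sub_lt hd (he j)) _
            (hRdeg _ _ (SetLike.coe_mem _)) (hRinv _)) (Algebra.subset_adjoin ⟨j, rfl⟩)
        · rw [hRfix 0 (by simp)]; exact Subalgebra.zero_mem _
  intro x
  constructor
  · intro hx g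
    induction hx using Algebra.adjoin_induction with
    | mem x h => obtain ⟨i, rfl⟩ := h; exact hRinv (f i) g
    | algebraMap k => exact (ρ g).commutes k
    | add x y _ _ h1 h2 => rw [map_add, h1, h2]
    | mul x y _ _ h1 h2 => rw [map_mul, h1, h2]
  · intro hx
    rw [← DirectSum.sum_support_decompose 𝒜 x]
    refine Subalgebra.sum_mem _ fun d _ => hhom d _ (SetLike.coe_mem _) fun g => ?_
    rw [← hilb_dec_comm 𝒜 (ρ g) (hdeg g), hx g]
end

section
/- Let K be a field and A = ⊕_{d ≥ 0} A_d an ℕ-graded (possibly noncommutative) associative unital K-algebra with A_0 = K·1, and let A_+ = ⊕_{d > 0} A_d. Let G be a finite group acting on A by degree-preserving K-algebra automorphisms, with |G| invertible in K, and let I_G = A·A_+^G be the left ideal of A generated by the G-invariant elements of positive degree. Suppose f_1, …, f_r are homogeneous elements of A_+^G (G-invariant elements of positive degree) that generate I_G as a left ideal of A. Then the fixed subalgebra A^G is generated as a K-algebra by f_1, …, f_r. (Invariant ideal generators are invariant algebra generators.) -/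
/-- **Invariant ideal generators are invariant algebra generators.**
Let `A = ⊕ A_d` be an ℕ-graded `K`-algebra with `A_0 = K·1`, and let a finite
group `G` with `|G|` invertible in `K` act on `A` by degree-preserving algebra
automorphisms.  If homogeneous `G`-invariant elements `f_1, …, f_r` of positive
degree generate the Hilbert left ideal `I_G = A·A_+^G`, then the fixed
subalgebra `A^G` is generated as a `K`-algebra by `f_1, …, f_r`. -/
theorem invariant_ideal_generators_are_invariant_algebra_generators
    (K : Type*) [Field K] (A : Type*) [Ring A] [Algebra K A]
    (𝒜 : ℕ → Submodule K A) [GradedAlgebra 𝒜]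
    (h0 : 𝒜 0 = (1 : Submodule K A))
    (G : Type*) [Group G] [Fintype G]
    (ρ : G →* (A ≃ₐ[K] A))
    (hdeg : ∀ (g : G) (d : ℕ), ∀ a ∈ 𝒜 d, ρ g a ∈ 𝒜 d)
    (hinv : (Fintype.card G : K) ≠ 0)
    (r : ℕ) (f : Fin r → A)
    (hf : ∀ i, (∃ d > 0, f i ∈ 𝒜 d) ∧ (∀ g : G, ρ g (f i) = f i))
    (hgen : Ideal.span (Set.range f)
      = Ideal.span {a : A | (∀ g : G, ρ g a = a) ∧
          a ∈ (⨆ d ∈ Set.Ioi (0 : ℕ), 𝒜 d : Submodule K A)}) :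
    ∀ x : A, x ∈ Algebra.adjoin K (Set.range f) ↔ ∀ g : G, ρ g x = x := by
  classical
  have hcomp : ∀ (g : G) (x : A) (d : ℕ),
      (DirectSum.decompose 𝒜 (ρ g x) d : A) = ρ g (DirectSum.decompose 𝒜 x d : A) := by
    intro g x d
    induction x using DirectSum.Decomposition.inductionOn 𝒜 with
    | zero => simp
    | @homogeneous i m =>
      by_cases hid : i = d
      · subst hid
        rw [DirectSum.decompose_of_mem_same 𝒜 (hdeg g i m m.2),
          DirectSum.decompose_of_mem_same 𝒜 m.2]
      · rw [DirectSum.decompose_of_mem_ne 𝒜 (hdeg g i m m.2) hid,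
          DirectSum.decompose_of_mem_ne 𝒜 m.2 hid, map_zero]
    | add a b ha hb =>
      simp [DirectSum.decompose_add, ha, hb]
  have hfi : ∀ i (g : G), ρ g (f i) = f i := fun i => (hf i).2
  choose D hDpos hD using fun i => (hf i).1
  have key : ∀ d : ℕ, ∀ x ∈ 𝒜 d, (∀ g : G, ρ g x = x) →
      x ∈ Algebra.adjoin K (Set.range f) := by
    intro d
    induction d using Nat.strong_induction_on with
    | _ d ih =>
    intro x hx hxG
    rcases Nat.eq_zero_or_pos d with rfl | hd
    · rw [h0, Submodule.mem_one] at hx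
      obtain ⟨k, rfl⟩ := hx
      exact Subalgebra.algebraMap_mem _ k
    · have hxI : x ∈ Ideal.span (Set.range f) := by
        rw [hgen]
        refine Ideal.subset_span ⟨hxG, ?_⟩
        exact Submodule.mem_iSup_of_mem d (Submodule.mem_iSup_of_mem hd hx)
      obtain ⟨a, ha⟩ := (Submodule.mem_span_range_iff_exists_fun A).1 hxI
      have hb : ∀ i, ∃ b : A, (DirectSum.decompose 𝒜 (a i * f i) d : A) = b * f i ∧
          b ∈ 𝒜 (d - D i) := by
        intro i
        by_cases hle : D i ≤ d
        · exact ⟨_, DirectSum.coe_decompose_mul_of_right_mem_of_le 𝒜 (hD i) hle,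
            SetLike.coe_mem _⟩
        · refine ⟨0, ?_, Submodule.zero_mem _⟩
          rw [DirectSum.coe_decompose_mul_of_right_mem_of_not_le 𝒜 (hD i) hle, zero_mul]
      choose b hb1 hb2 using hb
      have hxb : x = ∑ i, b i * f i := by
        rw [← DirectSum.decompose_of_mem_same 𝒜 hx, ← ha, DirectSum.decompose_sum,
          DFinsupp.finset_sum_apply, AddSubmonoidClass.coe_finset_sum]
        exact Finset.sum_congr rfl fun i _ => hb1 i
      have hsum : (Fintype.card G : K) • x = ∑ i, (∑ g : G, ρ g (b i)) * f i := by
        have h1 : ∑ g : G, ρ g x = (Fintype.card G : K) • x := by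
          simp [hxG, Nat.cast_smul_eq_nsmul]
        rw [← h1]
        simp_rw [Finset.sum_mul]
        rw [Finset.sum_comm]
        refine Finset.sum_congr rfl fun g _ => ?_
        conv_lhs => rw [hxb]
        simp [hfi]
      have hmem : (Fintype.card G : K) • x ∈ Algebra.adjoin K (Set.range f) := by
        rw [hsum]
        refine Subalgebra.sum_mem _ fun i _ => Subalgebra.mul_mem _ ?_
          (Algebra.subset_adjoin ⟨i, rfl⟩)
        refine ih (d - D i) (Nat.sub_lt hd (hDpos i)) _
          (Submodule.sum_mem _ fun g _ => hdeg g _ _ (hb2 i)) fun h => ?_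
        rw [map_sum]
        refine Fintype.sum_equiv (Equiv.mulLeft h) _ _ fun g => ?_
        simp
      have := Subalgebra.smul_mem _ hmem (Fintype.card G : K)⁻¹
      rwa [smul_smul, inv_mul_cancel₀ hinv, one_smul] at this
  intro x
  constructor
  · intro hx g
    induction hx using Algebra.adjoin_induction with
    | mem y hy => obtain ⟨i, rfl⟩ := hy; exact hfi i g
    | algebraMap k => simp
    | add a b _ _ ha hb => rw [map_add, ha, hb]
    | mul a b _ _ ha hb => rw [map_mul, ha, hb]
  · intro hx
    rw [← DirectSum.sum_support_decompose 𝒜 x]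
    refine Subalgebra.sum_mem _ fun d _ => key d _ (SetLike.coe_mem _) fun g => ?_
    rw [← hcomp, hx]
end
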